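/- Let d ≥ 2, 2 ≤ p ≤ ∞, and let φ : [0, ∞) → [0, 1] be a smooth function supported in the interval [1/2, 2]. There exists a constant C, depending only on d, p and φ, such that for every j ∈ ℤ, every real t ≠ 0, and every Schwartz function g on ℝ^d, the function w_j(x) = (2π)^{−d} ∫_{ℝ^d} e^{i x·κ} e^{i t |κ|} φ(2^{−j}|κ|) ĝ(κ) dκ satisfies ‖w_j‖_{L^p(ℝ^d)} ≤ C · |t|^{−(d−1)(p−2)/(2p)} · 2^{j (d+1)(p−2)/(2p)} · ‖g‖_{L^{p'}(ℝ^d)}, where p' is the conjugate exponent of p (1/p + 1/p' = 1). -/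

import Mathlib

open MeasureTheory ENNReal
open scoped RealInnerProductSpace

noncomputable section

/-- Shorthand for Euclidean space `ℝ^d`. -/
abbrev Ed (d : ℕ) := EuclideanSpace ℝ (Fin d)

/-- The homogeneous Besov (Gagliardo) seminorm `[f]_{r,p}`. -/
def gagliardo (d : ℕ) (r p : ℝ) {F : Type*} [NormedAddCommGroup F] (f : Ed d → F) : ℝ≥0∞ :=
  (∫⁻ x, ∫⁻ y, (‖f x - f y‖₊ : ℝ≥0∞) ^ p / (‖x - y‖₊ : ℝ≥0∞) ^ (r * p + d)) ^ (1 / p)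

/-- The homogeneous Hölder seminorm `{f}_r`. -/
def holderSemi (d : ℕ) (r : ℝ) {F : Type*} [NormedAddCommGroup F] (f : Ed d → F) : ℝ≥0∞ :=
  ⨆ x, ⨆ y, (‖f x - f y‖₊ : ℝ≥0∞) / (‖x - y‖₊ : ℝ≥0∞) ^ r

/-- The Fourier transform `f̂(κ) = ∫ e^{-i x·κ} f(x) dx`. -/
def ftransform (d : ℕ) (f : Ed d → ℂ) (κ : Ed d) : ℂ :=
  ∫ x, Complex.exp (-(Complex.I * (⟪x, κ⟫ : ℂ))) * f x

/-- The homogeneous Sobolev seminorm `[f]_θ = ((2π)^{-d} ∫ |κ|^{2θ} |f̂(κ)|² dκ)^{1/2}`. -/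
def sobolevSemi (d : ℕ) (θ : ℝ) (f : Ed d → ℂ) : ℝ≥0∞ :=
  (ENNReal.ofReal ((2 * Real.pi) ^ (-(d : ℝ))) *
    ∫⁻ κ, (‖κ‖₊ : ℝ≥0∞) ^ (2 * θ) * (‖ftransform d f κ‖₊ : ℝ≥0∞) ^ (2 : ℕ)) ^ ((1 : ℝ) / 2)

/-- A symbol of class `S⁰_{ph}`: smooth away from the origin and positively
homogeneous of degree `0`. -/
def IsSymbol0 (d : ℕ) (a : Ed d → ℂ) : Prop :=
  ContDiffOn ℝ (⊤ : ℕ∞) a {0}ᶜ ∧ ∀ (c : ℝ) (κ : Ed d), 0 < c → κ ≠ 0 → a (c • κ) = a κ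

/-- The operator `𝔞[f](x) = (2π)^{-d} ∫ e^{i x·κ} a(κ) f̂(κ) dκ` associated with a symbol. -/
def symbOp (d : ℕ) (a : Ed d → ℂ) (f : Ed d → ℂ) (x : Ed d) : ℂ :=
  (((2 * Real.pi) ^ (-(d : ℝ)) : ℝ) : ℂ) *
    ∫ κ, Complex.exp (Complex.I * (⟪x, κ⟫ : ℂ)) * a κ * ftransform d f κ

/-- The partial derivative `∂_i f(x)`. -/
def pd (d : ℕ) (i : Fin d) (f : Ed d → ℝ) (x : Ed d) : ℝ :=
  fderiv ℝ f x (EuclideanSpace.single i 1)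

/-- The half-wave propagator `(e^{itD} g)(x) = (2π)^{-d} ∫ e^{i x·κ} e^{i t|κ|} ĝ(κ) dκ`. -/
def halfWave (d : ℕ) (t : ℝ) (g : Ed d → ℂ) (x : Ed d) : ℂ :=
  (((2 * Real.pi) ^ (-(d : ℝ)) : ℝ) : ℂ) *
    ∫ κ, Complex.exp (Complex.I * ((⟪x, κ⟫ : ℂ) + (t : ℂ) * ((‖κ‖ : ℝ) : ℂ))) *
      ftransform d g κ

end

/-!
For `p = 2` the bound is Plancherel. For `p = ∞` it is the dispersive estimate for the convolution
kernel. Scaling reduces it to frequency `1`, and for large `t` the radial symbol, as a function of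
`‖κ‖²`, is a superposition of complex Gaussians `exp (-(1 - 2πis)‖κ‖²)`, whose Fourier transforms
have size `|s| ^ (-d / 2)` uniformly in `x`. The coefficient of this superposition is
nonstationary, hence negligible, for `|s| ≤ c|t|`, and Plancherel with Cauchy–Schwarz on
`|s| > c|t|` gives `|t| ^ (-(d - 1) / 2)`. Between the endpoints one interpolates by the real
method, cutting a Schwartz function smoothly according to the size of its values so that both
pieces stay Schwartz.
-/

open Complex hiding ofReal_ne_zero ofReal_add ofReal_one
open Set Function Module
open scoped ContDiff FourierTransform SchwartzMap NNReal

section NonstationaryPhase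

theorem hasCompactSupport_comp_prodMk_left {X Y M : Type*} [TopologicalSpace X]
    [TopologicalSpace Y] [R1Space Y] [Zero M] {f : X × Y → M} (hf : HasCompactSupport f) (x : X) :
    HasCompactSupport fun y => f (x, y) :=
  .intro (hf.isCompact.image continuous_snd) fun _ hy =>
    image_eq_zero_of_notMem_tsupport fun h => hy ⟨_, h, rfl⟩

theorem exists_integral_norm_prodMk_le {X F : Type*} [TopologicalSpace X] [NormedAddCommGroup F]
    {a : X × ℝ → F} (ha : Continuous a) (hac : HasCompactSupport a) :
    ∃ C : ℝ, 0 ≤ C ∧ ∀ x, ∫ u, ‖a (x, u)‖ ≤ C := by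
  obtain ⟨M, hM⟩ := ha.bounded_above_of_compact_support hac
  have hK : IsCompact (Prod.snd '' tsupport a) := hac.isCompact.image continuous_snd
  refine ⟨|M| * volume.real (Prod.snd '' tsupport a), by positivity, fun x => ?_⟩
  have hzero : ∀ u ∉ Prod.snd '' tsupport a, ‖a (x, u)‖ = 0 := fun u hu => by
    rw [image_eq_zero_of_notMem_tsupport fun h => hu ⟨_, h, rfl⟩, norm_zero]
  rw [← setIntegral_eq_integral_of_forall_compl_eq_zero hzero]
  refine (Real.le_norm_self _).trans
    (norm_setIntegral_le_of_norm_le_const hK.measure_lt_top fun u _ => ?_)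
  simpa only [norm_norm] using (hM (x, u)).trans (le_abs_self M)

variable {P F : Type*} [NormedAddCommGroup P] [NormedSpace ℝ P]
  [NormedAddCommGroup F] [NormedSpace ℝ F]

theorem deriv_comp_prodMk_left {f : P × ℝ → F} (hf : Differentiable ℝ f) (p : P) :
    (deriv fun u => f (p, u)) = fun u => fderiv ℝ f (p, u) (0, 1) :=
  funext fun u => ((hf (p, u)).hasFDerivAt.comp_hasDerivAt u
    ((hasDerivAt_const u p).prodMk (hasDerivAt_id u))).deriv

theorem contDiff_div_of_ne_zero_on_tsupport {a b : P → ℂ} (ha : ContDiff ℝ ∞ a)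
    (hb : ContDiff ℝ ∞ b) (hab : ∀ z ∈ tsupport a, b z ≠ 0) :
    ContDiff ℝ ∞ fun z => a z / b z := by
  refine contDiff_iff_contDiffAt.2 fun z => ?_
  by_cases hz : z ∈ tsupport a
  · simpa only [div_eq_mul_inv] using! ha.contDiffAt.mul (hb.contDiffAt.inv (hab z hz))
  · refine contDiffAt_const (c := (0 : ℂ)) |>.congr_of_eventuallyEq ?_
    filter_upwards [(isClosed_tsupport a).isOpen_compl.mem_nhds hz] with y hy
    rw [image_eq_zero_of_notMem_tsupport hy, zero_div]

theorem norm_cexp_ofReal_mul_I_mul (x : ℝ) (z : ℂ) : ‖z * cexp (x * I)‖ = ‖z‖ := by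
  rw [norm_mul, norm_exp_ofReal_mul_I, mul_one]

theorem mul_integral_deriv_mul_cexp {b : ℝ → ℂ} {Φ : ℝ → ℝ} (hb : ContDiff ℝ 1 b)
    (hΦ : ContDiff ℝ 1 Φ) (hbc : HasCompactSupport b) (t : ℝ) :
    t * I * ∫ u, b u * deriv Φ u * cexp ((t * Φ u : ℝ) * I) =
      -∫ u, deriv b u * cexp ((t * Φ u : ℝ) * I) := by
  have hcb : Continuous b := hb.continuous
  have : Continuous (deriv b) := hb.continuous_deriv le_rfl
  have hcΦ : Continuous Φ := hΦ.continuous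
  have : Continuous (deriv Φ) := hΦ.continuous_deriv le_rfl
  have hexp : ∀ u, HasDerivAt (fun v => cexp ((t * Φ v : ℝ) * I))
      (cexp ((t * Φ u : ℝ) * I) * ((t * deriv Φ u : ℝ) * I)) u := fun u =>
    ((((hΦ.differentiable one_ne_zero u).hasDerivAt.const_mul t).ofReal_comp).mul_const I).cexp
  have hparts := integral_mul_deriv_eq_deriv_mul_of_integrable
    (fun u _ => (hb.differentiable one_ne_zero u).hasDerivAt) (fun u _ => hexp u)
    ((by fun_prop : Continuous _).integrable_of_hasCompactSupport hbc.mul_right)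
    ((by fun_prop : Continuous _).integrable_of_hasCompactSupport hbc.deriv.mul_right)
    ((by fun_prop : Continuous _).integrable_of_hasCompactSupport hbc.mul_right)
  rw [← hparts, ← integral_const_mul]
  congr with u
  push_cast
  ring

theorem exists_norm_integral_mul_cexp_le {Φ : P × ℝ → ℝ} (hΦ : ContDiff ℝ ∞ Φ) (N : ℕ)
    {a : P × ℝ → ℂ} (ha : ContDiff ℝ ∞ a) (hac : HasCompactSupport a)
    (hnonstat : ∀ z ∈ tsupport a, fderiv ℝ Φ z (0, 1) ≠ 0) :
    ∃ C : ℝ, 0 ≤ C ∧ ∀ (p : P) (t : ℝ), t ≠ 0 →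
      ‖∫ u, a (p, u) * cexp ((t * Φ (p, u) : ℝ) * I)‖ ≤ C * |t|⁻¹ ^ N := by
  induction N generalizing a with
  | zero =>
    obtain ⟨C, hC0, hC⟩ := exists_integral_norm_prodMk_le ha.continuous hac
    refine ⟨C, hC0, fun p t _ => (norm_integral_le_integral_norm _).trans ?_⟩
    simpa only [norm_cexp_ofReal_mul_I_mul, pow_zero, mul_one] using hC p
  | succ N ih =>
    let dΦ : P × ℝ → ℝ := fun z => fderiv ℝ Φ z (0, 1)
    have hdΦ : ContDiff ℝ ∞ fun z => (dΦ z : ℂ) :=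
      ofRealCLM.contDiff.comp ((hΦ.fderiv_right le_rfl).clm_apply contDiff_const)
    let b : P × ℝ → ℂ := fun z => a z / dΦ z
    have hb : ContDiff ℝ ∞ b := contDiff_div_of_ne_zero_on_tsupport ha hdΦ fun z hz =>
      Complex.ofReal_ne_zero.2 (hnonstat z hz)
    have hbc : HasCompactSupport b := by
      simpa only [b, div_eq_mul_inv] using! hac.mul_right
    have hsupp : tsupport (fun z => fderiv ℝ b z (0, 1)) ⊆ tsupport a :=
      (tsupport_fderiv_apply_subset ℝ _).trans
        (by simpa only [b, div_eq_mul_inv] using! tsupport_mul_subset_left)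
    obtain ⟨C, hC0, hC⟩ := ih ((hb.fderiv_right le_rfl).clm_apply contDiff_const)
      (hbc.fderiv_apply ℝ _) fun z hz => hnonstat z (hsupp hz)
    refine ⟨C, hC0, fun p t ht => ?_⟩
    have hslice : ContDiff ℝ 1 fun u : ℝ => (p, u) := contDiff_prodMk_right p
    have hparts := mul_integral_deriv_mul_cexp ((hb.of_le (by simp)).comp hslice)
      ((hΦ.of_le (by simp)).comp hslice) (hasCompactSupport_comp_prodMk_left hbc p) t
    simp only [comp_def, deriv_comp_prodMk_left (hb.differentiable (by simp)),
      deriv_comp_prodMk_left (hΦ.differentiable (by simp))] at hparts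
    have hmul : t * I * ∫ u, a (p, u) * cexp ((t * Φ (p, u) : ℝ) * I) =
        -∫ u, fderiv ℝ b (p, u) (0, 1) * cexp ((t * Φ (p, u) : ℝ) * I) := by
      rw [← hparts]
      congr with u
      by_cases hz : (p, u) ∈ tsupport a
      · rw [div_mul_cancel₀ _ (Complex.ofReal_ne_zero.2 (hnonstat _ hz))]
      · simp [b, image_eq_zero_of_notMem_tsupport hz]
    have hnorm := congrArg norm hmul
    rw [norm_mul, norm_mul, norm_I, mul_one, norm_real, Real.norm_eq_abs, norm_neg] at hnorm
    rw [pow_succ, ← mul_assoc, ← div_eq_mul_inv, le_div_iff₀ (abs_pos.2 ht), mul_comm, hnorm]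
    exact hC p t ht

end NonstationaryPhase

section GaussianSubordination

variable {E : Type*} [NormedAddCommGroup E] [InnerProductSpace ℝ E] [FiniteDimensional ℝ E]
  [MeasurableSpace E] [BorelSpace E]

theorem norm_integral_cexp_neg_mul_sq_norm_add_inner_le {b : ℂ} (hb : 0 < b.re) (x : E) :
    ‖∫ κ : E, cexp (-b * ‖κ‖ ^ 2 + I * ⟪x, κ⟫)‖ ≤ (Real.pi / ‖b‖) ^ ((finrank ℝ E : ℝ) / 2) := by
  have hexp : ‖cexp (I ^ 2 * (‖x‖ : ℂ) ^ 2 / (4 * b))‖ ≤ 1 := by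
    have hre : I ^ 2 * (‖x‖ : ℂ) ^ 2 / (4 * b) = ((-(‖x‖ ^ 2 / 4) : ℝ) : ℂ) * b⁻¹ := by
      rw [I_sq]
      push_cast
      ring
    rw [norm_exp, Real.exp_le_one_iff, hre, re_ofReal_mul, inv_re]
    exact mul_nonpos_of_nonpos_of_nonneg (by simp only [Left.neg_nonpos_iff]; positivity)
      (div_nonneg hb.le (normSq_nonneg b))
  have hdim : (finrank ℝ E : ℂ) / 2 = (((finrank ℝ E : ℝ) / 2 : ℝ) : ℂ) := by push_cast; rfl
  rw [GaussianFourier.integral_cexp_neg_mul_sq_norm_add hb, norm_mul, hdim, norm_cpow_real,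
    norm_div, norm_real, Real.norm_of_nonneg Real.pi_nonneg]
  exact mul_le_of_le_one_right (by positivity) hexp

theorem one_le_norm_one_sub_two_pi_mul_I (s : ℝ) : 1 ≤ ‖(1 - 2 * Real.pi * s * I : ℂ)‖ := by
  simpa using abs_re_le_norm (1 - 2 * Real.pi * s * I)

theorem abs_le_norm_one_sub_two_pi_mul_I (s : ℝ) : |s| ≤ ‖(1 - 2 * Real.pi * s * I : ℂ)‖ := by
  have him : |2 * Real.pi * s| ≤ ‖(1 - 2 * Real.pi * s * I : ℂ)‖ := by
    simpa using abs_im_le_norm (1 - 2 * Real.pi * s * I)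
  refine le_trans ?_ him
  rw [abs_mul, abs_of_pos Real.two_pi_pos]
  exact le_mul_of_one_le_left (abs_nonneg s) (by linarith [Real.pi_gt_three])

/-- The decay rate in `s` of the Fourier transform of the complex Gaussian
`κ ↦ exp (-(1 - 2πis)‖κ‖²)` on an `n`-dimensional space. -/
noncomputable def gaussianWeight (n s : ℝ) : ℝ :=
  ‖(1 - 2 * Real.pi * s * I : ℂ)‖ ^ (-(n / 2))

theorem gaussianWeight_nonneg (n s : ℝ) : 0 ≤ gaussianWeight n s :=
  Real.rpow_nonneg (norm_nonneg _) _

theorem gaussianWeight_le_one {n : ℝ} (hn : 0 ≤ n) (s : ℝ) : gaussianWeight n s ≤ 1 :=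
  Real.rpow_le_one_of_one_le_of_nonpos (one_le_norm_one_sub_two_pi_mul_I s) (by linarith)

theorem gaussianWeight_le_abs_rpow {n s : ℝ} (hn : 0 ≤ n) (hs : s ≠ 0) :
    gaussianWeight n s ≤ |s| ^ (-(n / 2)) :=
  Real.rpow_le_rpow_of_nonpos (abs_pos.2 hs) (abs_le_norm_one_sub_two_pi_mul_I s) (by linarith)

theorem continuous_gaussianWeight (n : ℝ) : Continuous (gaussianWeight n) :=
  Continuous.rpow_const (by fun_prop) fun s =>
    .inl (zero_lt_one.trans_le (one_le_norm_one_sub_two_pi_mul_I s)).ne'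

theorem integrable_norm_mul_gaussianWeight {n : ℝ} (hn : 0 ≤ n) (G : 𝓢(ℝ, ℂ)) :
    Integrable fun s => ‖G s‖ * gaussianWeight n s :=
  G.integrable.norm.mono'
    (G.continuous.norm.mul (continuous_gaussianWeight n)).aestronglyMeasurable
    (.of_forall fun s => by
      rw [norm_mul, norm_norm, Real.norm_of_nonneg (gaussianWeight_nonneg n s)]
      exact mul_le_of_le_one_right (norm_nonneg _) (gaussianWeight_le_one hn s))

-- Inverting the Fourier transform of `G` writes `exp (-‖κ‖²) G(‖κ‖²)` as a superposition of the
-- complex Gaussians `exp (-(1 - 2πis)‖κ‖²)`, whose Fourier transforms are explicit.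
theorem norm_integral_cexp_neg_sq_norm_mul_le (G : 𝓢(ℝ, ℂ)) (x : E) :
    ‖∫ κ : E, cexp (-‖κ‖ ^ 2 + I * ⟪x, κ⟫) * G (‖κ‖ ^ 2)‖ ≤
      Real.pi ^ ((finrank ℝ E : ℝ) / 2) * ∫ s, ‖𝓕 G s‖ * gaussianWeight (finrank ℝ E) s := by
  have hsuper (κ : E) : cexp (-‖κ‖ ^ 2 + I * ⟪x, κ⟫) * G (‖κ‖ ^ 2) =
      ∫ s : ℝ, cexp (-(1 - 2 * Real.pi * s * I) * ‖κ‖ ^ 2 + I * ⟪x, κ⟫) * 𝓕 G s := by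
    have hG : 𝓕⁻ (𝓕 G) (‖κ‖ ^ 2) = G (‖κ‖ ^ 2) := by rw [FourierTransform.fourierInv_fourier_eq]
    rw [← hG, SchwartzMap.fourierInv_coe, Real.fourierInv_eq', ← integral_const_mul]
    congr with s
    rw [smul_eq_mul, ← mul_assoc, ← Complex.exp_add]
    congr 2
    simp
    ring
  have hint : Integrable (uncurry fun (κ : E) (s : ℝ) =>
      cexp (-(1 - 2 * Real.pi * s * I) * ‖κ‖ ^ 2 + I * ⟪x, κ⟫) * 𝓕 G s)
      (volume.prod volume) := by
    have hgauss : Integrable fun κ : E => cexp (-(1 : ℂ) * ‖κ‖ ^ 2 + 0 * ⟪(0 : E), κ⟫) :=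
      GaussianFourier.integrable_cexp_neg_mul_sq_norm_add (by simp) 0 0
    refine (hgauss.mul_prod (𝓕 G).integrable).mono
      (Continuous.aestronglyMeasurable (by unfold uncurry; fun_prop)) (.of_forall fun z => ?_)
    simp [uncurry, norm_exp, ← Complex.ofReal_pow]
  simp_rw [hsuper]
  rw [integral_integral_swap hint, ← integral_const_mul]
  refine norm_integral_le_of_norm_le
    ((integrable_norm_mul_gaussianWeight (Nat.cast_nonneg _) (𝓕 G)).const_mul _)
    (.of_forall fun s => ?_)
  have hgauss := norm_integral_cexp_neg_mul_sq_norm_add_inner_le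
    (b := 1 - 2 * Real.pi * s * I) (by simp) x
  rw [Real.div_rpow Real.pi_nonneg (norm_nonneg _), div_eq_mul_inv,
    ← Real.rpow_neg (norm_nonneg _)] at hgauss
  rw [integral_mul_const, norm_mul, mul_left_comm, mul_comm]
  exact mul_le_mul_of_nonneg_left hgauss (norm_nonneg _)

end GaussianSubordination

section GaussianProfile

theorem contDiff_comp_of_contDiffAt_on_tsupport {X H F : Type*} [NormedAddCommGroup X]
    [NormedSpace ℝ X] [NormedAddCommGroup H] [NormedSpace ℝ H] [NormedAddCommGroup F]
    [NormedSpace ℝ F] {n : WithTop ℕ∞} {f : H → F} {g : X → H} (hf : ContDiff ℝ n f)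
    (hg : Continuous g) (hgn : ∀ x, g x ∈ tsupport f → ContDiffAt ℝ n g x) :
    ContDiff ℝ n fun x => f (g x) := by
  refine contDiff_iff_contDiffAt.2 fun x => ?_
  by_cases hx : g x ∈ tsupport f
  · exact hf.contDiffAt.comp x (hgn x hx)
  · refine (contDiffAt_const (c := (0 : F))).congr_of_eventuallyEq ?_
    filter_upwards [hg.continuousAt.preimage_mem_nhds
      ((isClosed_tsupport f).isOpen_compl.mem_nhds hx)] with y hy
    exact image_eq_zero_of_notMem_tsupport hy

/-- The profile `ρ ↦ exp ρ · ψ(√ρ)`, which turns the radial function `κ ↦ ψ ‖κ‖` into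
`κ ↦ exp (-‖κ‖²) · gaussianProfile ψ (‖κ‖²)`. -/
noncomputable def gaussianProfile (ψ : ℝ → ℂ) (ρ : ℝ) : ℂ :=
  Real.exp ρ * ψ (√ρ)

variable {φ ψ : ℝ → ℂ}

theorem contDiff_gaussianProfile (hψ : ContDiff ℝ ∞ ψ) (hψ0 : tsupport ψ ⊆ Ioi 0) :
    ContDiff ℝ ∞ (gaussianProfile ψ) :=
  (ofRealCLM.contDiff.comp Real.contDiff_exp).mul
    (contDiff_comp_of_contDiffAt_on_tsupport hψ Real.continuous_sqrt fun _ hρ =>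
      Real.contDiffAt_sqrt (Real.sqrt_pos.1 (hψ0 hρ)).ne')

theorem gaussianProfile_eq_zero_of_nonpos (hψ0 : tsupport ψ ⊆ Ioi 0) {ρ : ℝ} (hρ : ρ ≤ 0) :
    gaussianProfile ψ ρ = 0 := by
  have hzero : ψ 0 = 0 := image_eq_zero_of_notMem_tsupport fun h => lt_irrefl (0 : ℝ) (hψ0 h)
  rw [gaussianProfile, Real.sqrt_eq_zero_of_nonpos hρ, hzero, mul_zero]

theorem hasCompactSupport_gaussianProfile (hψc : HasCompactSupport ψ) (hψ0 : tsupport ψ ⊆ Ioi 0) :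
    HasCompactSupport (gaussianProfile ψ) := by
  refine .intro (hψc.isCompact.image (continuous_pow 2)) fun ρ hρ => ?_
  rcases le_or_gt ρ 0 with hneg | hpos
  · exact gaussianProfile_eq_zero_of_nonpos hψ0 hneg
  · rw [gaussianProfile, image_eq_zero_of_notMem_tsupport fun h => hρ ⟨_, h, Real.sq_sqrt hpos.le⟩,
      mul_zero]

theorem exists_schwartzMap_eq_gaussianProfile (hψ : ContDiff ℝ ∞ ψ) (hψc : HasCompactSupport ψ)
    (hψ0 : tsupport ψ ⊆ Ioi 0) : ∃ G : 𝓢(ℝ, ℂ), ⇑G = gaussianProfile ψ :=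
  ⟨(hasCompactSupport_gaussianProfile hψc hψ0).toSchwartzMap (contDiff_gaussianProfile hψ hψ0), rfl⟩

theorem fourier_gaussianProfile (hψ0 : tsupport ψ ⊆ Ioi 0) (s : ℝ) :
    𝓕 (gaussianProfile ψ) s =
      ∫ u : ℝ, 2 * u * Real.exp (u ^ 2) * ψ u * cexp (-(2 * Real.pi * s * u ^ 2 : ℝ) * I) := by
  have hψneg : ∀ u ∉ Ioi (0 : ℝ), ψ u = 0 := fun u hu =>
    image_eq_zero_of_notMem_tsupport fun h => hu (hψ0 h)
  have hprofile : ∀ ρ ∉ Ioi (0 : ℝ), cexp ((-2 * Real.pi * ρ * s : ℝ) * I) •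
      gaussianProfile ψ ρ = 0 := fun ρ hρ => by
    rw [gaussianProfile_eq_zero_of_nonpos hψ0 (notMem_Ioi.1 hρ), smul_zero]
  have hsubst : ∀ u ∉ Ioi (0 : ℝ), 2 * u * Real.exp (u ^ 2) * ψ u *
      cexp (-(2 * Real.pi * s * u ^ 2 : ℝ) * I) = 0 := fun u hu => by
    rw [hψneg u hu, mul_zero, zero_mul]
  rw [Real.fourier_real_eq_integral_exp_smul,
    ← setIntegral_eq_integral_of_forall_compl_eq_zero hprofile,
    ← setIntegral_eq_integral_of_forall_compl_eq_zero hsubst,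
    ← integral_comp_rpow_Ioi_of_pos (p := 2) two_pos]
  refine setIntegral_congr_fun measurableSet_Ioi fun u hu => ?_
  have hsub : (2 : ℝ) - 1 = 1 := by norm_num
  simp only [Real.rpow_two, hsub, Real.rpow_one, gaussianProfile, Real.sqrt_sq (le_of_lt hu),
    smul_eq_mul, real_smul]
  push_cast
  ring_nf

end GaussianProfile

section WeightedIntegral

theorem setIntegral_abs_rpow_neg {n r : ℝ} (hn : 1 < n) (hr : 0 < r) :
    ∫ s in {s : ℝ | r < |s|}, |s| ^ (-n) = 2 * (r ^ (1 - n) / (n - 1)) := by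
  have hmeas : MeasurableSet {s : ℝ | r < |s|} := measurableSet_lt measurable_const measurable_norm
  have habs : ({s : ℝ | r < |s|}.indicator fun s => |s| ^ (-n)) =
      fun s => (Ioi r).indicator (fun ρ => ρ ^ (-n)) |s| := rfl
  rw [← integral_indicator hmeas, habs, integral_comp_abs, setIntegral_indicator measurableSet_Ioi,
    inter_eq_right.2 (Ioi_subset_Ioi hr.le), integral_Ioi_rpow_of_lt (by linarith) hr,
    ← neg_div_neg_eq]
  congr 3 <;> ring_nf

theorem integrableOn_abs_rpow_neg {n r : ℝ} (hn : 1 < n) (hr : 0 < r) :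
    IntegrableOn (fun s : ℝ => |s| ^ (-n)) {s : ℝ | r < |s|} := by
  refine .of_integral_ne_zero ?_
  rw [setIntegral_abs_rpow_neg hn hr]
  have := sub_pos.2 hn
  positivity

theorem sq_gaussianWeight_le_abs_rpow {n s : ℝ} (hn : 0 ≤ n) (hs : s ≠ 0) :
    gaussianWeight n s ^ 2 ≤ |s| ^ (-n) :=
  calc gaussianWeight n s ^ 2 ≤ (|s| ^ (-(n / 2))) ^ 2 :=
        pow_le_pow_left₀ (gaussianWeight_nonneg n s) (gaussianWeight_le_abs_rpow hn hs) 2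
    _ = |s| ^ (-n) := by rw [← Real.rpow_mul_natCast (abs_nonneg s)]; ring_nf

theorem integrableOn_sq_gaussianWeight {n r : ℝ} (hn : 1 < n) (hr : 0 < r) :
    IntegrableOn (fun s => gaussianWeight n s ^ 2) {s : ℝ | r < |s|} := by
  refine (integrableOn_abs_rpow_neg hn hr).mono'
    ((continuous_gaussianWeight n).pow 2).aestronglyMeasurable ?_
  filter_upwards [ae_restrict_mem (measurableSet_lt measurable_const measurable_norm)] with s hs
  rw [Real.norm_of_nonneg (sq_nonneg _)]
  exact sq_gaussianWeight_le_abs_rpow (by linarith) (abs_pos.1 (hr.trans hs))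

theorem sqrt_setIntegral_sq_gaussianWeight_le {n r : ℝ} (hn : 1 < n) (hr : 0 < r) :
    √(∫ s in {s : ℝ | r < |s|}, gaussianWeight n s ^ 2) ≤
      √(2 / (n - 1)) * r ^ (-((n - 1) / 2)) := by
  have := sub_pos.2 hn
  have hsq : (√(2 / (n - 1)) * r ^ (-((n - 1) / 2))) ^ 2 = 2 * (r ^ (1 - n) / (n - 1)) := by
    rw [mul_pow, Real.sq_sqrt (by positivity), ← Real.rpow_mul_natCast hr.le]
    ring_nf
  refine Real.sqrt_le_iff.2 ⟨by positivity, ?_⟩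
  rw [hsq, ← setIntegral_abs_rpow_neg hn hr]
  refine integral_mono_of_nonneg (.of_forall fun _ => sq_nonneg _)
    (integrableOn_abs_rpow_neg hn hr) ?_
  filter_upwards [ae_restrict_mem (measurableSet_lt measurable_const measurable_norm)] with s hs
  exact sq_gaussianWeight_le_abs_rpow (by linarith) (abs_pos.1 (hr.trans hs))

theorem integral_norm_mul_gaussianWeight_le {n r δ : ℝ} (hn : 1 < n) (hr : 0 < r) (G : 𝓢(ℝ, ℂ))
    (hG : ∀ s, |s| ≤ r → ‖G s‖ ≤ δ) :
    ∫ s, ‖G s‖ * gaussianWeight n s ≤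
      2 * r * δ + √(∫ s, ‖G s‖ ^ 2) * (√(2 / (n - 1)) * r ^ (-((n - 1) / 2))) := by
  have hmeas : MeasurableSet {s : ℝ | r < |s|} := measurableSet_lt measurable_const measurable_norm
  have hcompl : {s : ℝ | r < |s|}ᶜ = Icc (-r) r := by ext s; simp [abs_le]
  rw [← integral_add_compl hmeas (integrable_norm_mul_gaussianWeight (by linarith) G), add_comm]
  refine add_le_add ?_ ?_
  · have hbound : ∀ s ∈ {s : ℝ | r < |s|}ᶜ, ‖‖G s‖ * gaussianWeight n s‖ ≤ δ := fun s hs => by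
      rw [norm_mul, norm_norm, Real.norm_of_nonneg (gaussianWeight_nonneg n s)]
      exact (mul_le_of_le_one_right (norm_nonneg _) (gaussianWeight_le_one (by linarith) s)).trans
        (hG s (not_lt.1 hs))
    rw [hcompl] at hbound ⊢
    refine (Real.le_norm_self _).trans
      ((norm_setIntegral_le_of_norm_le_const measure_Icc_lt_top hbound).trans_eq ?_)
    rw [Real.volume_real_Icc_of_le (by linarith)]
    ring
  · have hGint : Integrable fun s => ‖G s‖ ^ 2 := (G.memLp 2).integrable_norm_pow two_ne_zero
    have hweight : MemLp (gaussianWeight n) 2 (volume.restrict {s : ℝ | r < |s|}) :=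
      (memLp_two_iff_integrable_sq (continuous_gaussianWeight n).aestronglyMeasurable).2
        (integrableOn_sq_gaussianWeight hn hr)
    have hholder := integral_mul_le_Lp_mul_Lq_of_nonneg .two_two
      (μ := volume.restrict {s : ℝ | r < |s|}) (.of_forall fun s => norm_nonneg (G s))
      (.of_forall (gaussianWeight_nonneg n))
      (by simpa using (G.memLp 2).norm.restrict _)
      (by simpa using hweight)
    simp only [Real.rpow_two, ← Real.sqrt_eq_rpow] at hholder
    exact hholder.trans (mul_le_mul (Real.sqrt_le_sqrt
      (setIntegral_le_integral hGint (.of_forall fun _ => sq_nonneg _)))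
      (sqrt_setIntegral_sq_gaussianWeight_le hn hr) (Real.sqrt_nonneg _) (Real.sqrt_nonneg _))

end WeightedIntegral

section ModulatedProfile

/-- The half-wave amplitude `u ↦ φ(u) exp (itu)`. -/
noncomputable def modulated (φ : ℝ → ℂ) (t u : ℝ) : ℂ :=
  φ u * cexp ((t * u : ℝ) * I)

variable {φ : ℝ → ℂ}

theorem norm_modulated (φ : ℝ → ℂ) (t u : ℝ) : ‖modulated φ t u‖ = ‖φ u‖ :=
  norm_cexp_ofReal_mul_I_mul _ _

theorem contDiff_modulated (hφ : ContDiff ℝ ∞ φ) (t : ℝ) : ContDiff ℝ ∞ (modulated φ t) :=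
  hφ.mul ((ofRealCLM.contDiff.comp (contDiff_const.mul contDiff_id)).mul contDiff_const).cexp

theorem hasCompactSupport_modulated (hφc : HasCompactSupport φ) (t : ℝ) :
    HasCompactSupport (modulated φ t) :=
  hφc.mul_right

theorem tsupport_modulated_subset (φ : ℝ → ℂ) (t : ℝ) : tsupport (modulated φ t) ⊆ tsupport φ :=
  tsupport_mul_subset_left

theorem exists_schwartzMap_eq_gaussianProfile_modulated (hφ : ContDiff ℝ ∞ φ)
    (hφc : HasCompactSupport φ) (hφ0 : tsupport φ ⊆ Ioi 0) (t : ℝ) :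
    ∃ G : 𝓢(ℝ, ℂ), ⇑G = gaussianProfile (modulated φ t) :=
  exists_schwartzMap_eq_gaussianProfile (contDiff_modulated hφ t)
    (hasCompactSupport_modulated hφc t) ((tsupport_modulated_subset φ t).trans hφ0)

theorem integral_sq_norm_fourier_gaussianProfile_modulated (hφ : ContDiff ℝ ∞ φ)
    (hφc : HasCompactSupport φ) (hφ0 : tsupport φ ⊆ Ioi 0) (t : ℝ) :
    ∫ s, ‖𝓕 (gaussianProfile (modulated φ t)) s‖ ^ 2 = ∫ ρ, ‖gaussianProfile φ ρ‖ ^ 2 := by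
  obtain ⟨G, hG⟩ := exists_schwartzMap_eq_gaussianProfile_modulated hφ hφc hφ0 t
  have hplancherel := SchwartzMap.integral_norm_sq_fourier G
  rw [SchwartzMap.fourier_coe, hG] at hplancherel
  rw [hplancherel]
  simp only [gaussianProfile, norm_mul, norm_modulated]

theorem exists_norm_integral_mul_cexp_sub_sq_le {f : ℝ → ℂ} (hf : ContDiff ℝ ∞ f)
    (hfc : HasCompactSupport f) (N : ℕ) :
    ∃ δ C : ℝ, 0 < δ ∧ 0 ≤ C ∧ ∀ σ t : ℝ, |σ| ≤ δ → t ≠ 0 →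
      ‖∫ u, f u * cexp ((t * (u - σ * u ^ 2) : ℝ) * I)‖ ≤ C * |t|⁻¹ ^ N := by
  obtain ⟨b, hb0, hb⟩ := hfc.isCompact.isBounded.exists_pos_norm_le
  let χ : ContDiffBump (0 : ℝ) := ⟨(8 * b)⁻¹, (4 * b)⁻¹, by positivity, by gcongr; norm_num⟩
  let a : ℝ × ℝ → ℂ := fun z => χ z.1 * f z.2
  let Φ : ℝ × ℝ → ℝ := fun z => z.2 - z.1 * z.2 ^ 2
  have htsupp : tsupport a ⊆ Metric.closedBall 0 (4 * b)⁻¹ ×ˢ tsupport f :=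
    closure_minimal (fun z hz => ⟨χ.tsupport_eq ▸ subset_tsupport χ fun h => hz (by simp [a, h]),
      subset_tsupport f fun h => hz (by simp [a, h])⟩)
      (Metric.isClosed_closedBall.prod (isClosed_tsupport f))
  have hac : HasCompactSupport a := ((isCompact_closedBall _ _).prod hfc.isCompact)
    |>.of_isClosed_subset (isClosed_tsupport a) htsupp
  have ha : ContDiff ℝ ∞ a :=
    (ofRealCLM.contDiff.comp (χ.contDiff.comp contDiff_fst)).mul (hf.comp contDiff_snd)
  have hΦ : ContDiff ℝ ∞ Φ := by fun_prop
  have hnonstat : ∀ z ∈ tsupport a, fderiv ℝ Φ z (0, 1) ≠ 0 := fun z hz => by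
    have hdΦ : HasDerivAt (fun u => Φ (z.1, u)) (1 - z.1 * (2 * z.2)) z.2 := by
      simpa using! (hasDerivAt_id z.2).sub ((hasDerivAt_pow 2 z.2).const_mul z.1)
    have hsmall : |z.1 * z.2| ≤ 1 / 4 := by
      rw [abs_mul]
      exact (mul_le_mul (by simpa using (htsupp hz).1) (hb _ (htsupp hz).2) (abs_nonneg _)
        (by positivity)).trans_eq (by field_simp)
    rw [← congrFun (deriv_comp_prodMk_left (hΦ.differentiable (by simp)) z.1) z.2, hdΦ.deriv]
    linarith [abs_le.1 hsmall]
  obtain ⟨C, hC0, hC⟩ := exists_norm_integral_mul_cexp_le hΦ N ha hac hnonstat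
  refine ⟨(8 * b)⁻¹, C, by positivity, hC0, fun σ t hσ ht => ?_⟩
  have hχ : χ σ = 1 := χ.one_of_mem_closedBall (mem_closedBall_zero_iff.2 hσ)
  simpa only [a, hχ, Complex.ofReal_one, one_mul] using hC σ t ht

-- In the variable `u = √ρ` the phase is `t (u - σu²)` with `σ = 2πs/t`.
theorem exists_norm_fourier_gaussianProfile_modulated_le (hφ : ContDiff ℝ ∞ φ)
    (hφc : HasCompactSupport φ) (hφ0 : tsupport φ ⊆ Ioi 0) (N : ℕ) :
    ∃ c C : ℝ, 0 < c ∧ 0 ≤ C ∧ ∀ t s : ℝ, t ≠ 0 → |s| ≤ c * |t| →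
      ‖𝓕 (gaussianProfile (modulated φ t)) s‖ ≤ C * |t|⁻¹ ^ N := by
  have hexp : ContDiff ℝ ∞ fun u : ℝ => Real.exp (u ^ 2) := by fun_prop
  obtain ⟨δ, C, hδ, hC0, hC⟩ := exists_norm_integral_mul_cexp_sub_sq_le
    (((contDiff_const (c := 2).mul ofRealCLM.contDiff).mul (ofRealCLM.contDiff.comp hexp)).mul hφ)
    hφc.mul_left N
  refine ⟨δ / (2 * Real.pi), C, by positivity, hC0, fun t s ht hs => ?_⟩
  have hσ : |2 * Real.pi * s / t| ≤ δ := by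
    rw [abs_div, abs_mul, abs_of_pos Real.two_pi_pos, div_le_iff₀ (abs_pos.2 ht), mul_comm,
      ← le_div_iff₀ Real.two_pi_pos]
    exact hs.trans_eq (by ring)
  rw [fourier_gaussianProfile ((tsupport_modulated_subset φ t).trans hφ0)]
  refine le_of_eq_of_le (congrArg norm (integral_congr_ae (.of_forall fun u => ?_)))
    (hC (2 * Real.pi * s / t) t hσ ht)
  have hphase : t * (u - 2 * Real.pi * s / t * u ^ 2) = t * u + -(2 * Real.pi * s * u ^ 2) := by
    field_simp
    ring
  simp only [modulated, hphase, comp_apply, ofRealCLM_apply]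
  rw [Complex.ofReal_add, add_mul, Complex.exp_add, Complex.ofReal_neg]
  ring

end ModulatedProfile

section WaveKernel

variable {E : Type*} [NormedAddCommGroup E] [InnerProductSpace ℝ E] [FiniteDimensional ℝ E]
  [MeasurableSpace E] [BorelSpace E] {φ : ℝ → ℂ}

/-- The kernel `x ↦ ∫ exp (i (⟪x, κ⟫ + t ‖κ‖)) φ(‖κ‖) dκ` of the frequency-localized half-wave
propagator, without the factor `(2π)⁻ⁿ`. -/
noncomputable def waveKernel (φ : ℝ → ℂ) (t : ℝ) (x : E) : ℂ :=
  ∫ κ : E, cexp (I * ((⟪x, κ⟫ : ℂ) + t * ‖κ‖)) * φ ‖κ‖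

theorem norm_cexp_I_mul_add_mul (a b : ℝ) (c : ℂ) : ‖cexp (I * (a + b)) * c‖ = ‖c‖ := by
  rw [norm_mul, ← Complex.ofReal_add, norm_exp_I_mul_ofReal, one_mul]

theorem norm_waveKernel_le (φ : ℝ → ℂ) (t : ℝ) (x : E) :
    ‖waveKernel φ t x‖ ≤ ∫ κ : E, ‖φ ‖κ‖‖ := by
  refine (norm_integral_le_integral_norm _).trans_eq (integral_congr_ae (.of_forall fun κ => ?_))
  simp only [← Complex.ofReal_mul, norm_cexp_I_mul_add_mul]

theorem norm_waveKernel_le_integral_fourier (hφ : ContDiff ℝ ∞ φ) (hφc : HasCompactSupport φ)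
    (hφ0 : tsupport φ ⊆ Ioi 0) (t : ℝ) (x : E) :
    ‖waveKernel φ t x‖ ≤ Real.pi ^ ((finrank ℝ E : ℝ) / 2) *
      ∫ s, ‖𝓕 (gaussianProfile (modulated φ t)) s‖ * gaussianWeight (finrank ℝ E) s := by
  obtain ⟨G, hG⟩ := exists_schwartzMap_eq_gaussianProfile_modulated hφ hφc hφ0 t
  have hkernel : waveKernel φ t x = ∫ κ : E, cexp (-‖κ‖ ^ 2 + I * ⟪x, κ⟫) * G (‖κ‖ ^ 2) := by
    refine integral_congr_ae (.of_forall fun κ => ?_)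
    simp only [hG, gaussianProfile, modulated, Real.sqrt_sq (norm_nonneg κ), mul_add,
      Complex.exp_add, exp_neg]
    push_cast
    field_simp
  rw [hkernel, ← hG, ← SchwartzMap.fourier_coe]
  exact norm_integral_cexp_neg_sq_norm_mul_le G x

theorem exists_norm_waveKernel_le_of_one_le_abs (hφ : ContDiff ℝ ∞ φ) (hφc : HasCompactSupport φ)
    (hφ0 : tsupport φ ⊆ Ioi 0) (hE : 1 < finrank ℝ E) :
    ∃ C : ℝ, 0 ≤ C ∧ ∀ (t : ℝ) (x : E), 1 ≤ |t| →
      ‖waveKernel φ t x‖ ≤ C * |t| ^ (-(((finrank ℝ E : ℝ) - 1) / 2)) := by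
  set n : ℕ := finrank ℝ E
  have hn : (1 : ℝ) < n := mod_cast hE
  obtain ⟨c, C, hc, hC0, hC⟩ :=
    exists_norm_fourier_gaussianProfile_modulated_le hφ hφc hφ0 n
  set M : ℝ := ∫ ρ, ‖gaussianProfile φ ρ‖ ^ 2
  refine ⟨Real.pi ^ ((n : ℝ) / 2) * (2 * c * C +
    √M * (√(2 / (n - 1)) * c ^ (-(((n : ℝ) - 1) / 2)))),
    by positivity, fun t x ht => ?_⟩
  have ht0 : 0 < |t| := one_pos.trans_le ht
  obtain ⟨G, hG⟩ := exists_schwartzMap_eq_gaussianProfile_modulated hφ hφc hφ0 t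
  have hweighted := integral_norm_mul_gaussianWeight_le hn (mul_pos hc ht0) (𝓕 G) fun s hs => by
    simpa only [SchwartzMap.fourier_coe, hG] using hC t s (abs_pos.1 ht0) hs
  rw [SchwartzMap.fourier_coe, hG,
    integral_sq_norm_fourier_gaussianProfile_modulated hφ hφc hφ0] at hweighted
  have hinner : |t| * |t|⁻¹ ^ n ≤ |t| ^ (-(((n : ℝ) - 1) / 2)) := by
    rw [inv_pow, ← Real.rpow_natCast, ← Real.rpow_neg ht0.le, ← Real.rpow_one_add' ht0.le]
    · exact Real.rpow_le_rpow_of_exponent_le ht (by linarith)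
    · linarith
  calc ‖waveKernel φ t x‖
      ≤ Real.pi ^ ((n : ℝ) / 2) * (2 * (c * |t|) * (C * |t|⁻¹ ^ n) +
          √M * (√(2 / (n - 1)) * (c * |t|) ^ (-(((n : ℝ) - 1) / 2)))) :=
        (norm_waveKernel_le_integral_fourier hφ hφc hφ0 t x).trans (by gcongr)
    _ = Real.pi ^ ((n : ℝ) / 2) * (2 * c * C * (|t| * |t|⁻¹ ^ n) + √M * (√(2 / (n - 1)) *
          c ^ (-(((n : ℝ) - 1) / 2))) * |t| ^ (-(((n : ℝ) - 1) / 2))) := by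
        rw [Real.mul_rpow hc.le ht0.le]
        ring
    _ ≤ Real.pi ^ ((n : ℝ) / 2) * (2 * c * C * |t| ^ (-(((n : ℝ) - 1) / 2)) + √M *
          (√(2 / (n - 1)) * c ^ (-(((n : ℝ) - 1) / 2))) * |t| ^ (-(((n : ℝ) - 1) / 2))) := by
        gcongr
    _ = _ := by ring

theorem exists_norm_waveKernel_le (hφ : ContDiff ℝ ∞ φ) (hφc : HasCompactSupport φ)
    (hφ0 : tsupport φ ⊆ Ioi 0) :
    ∃ C : ℝ, 0 < C ∧ ∀ (t : ℝ) (x : E), t ≠ 0 →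
      ‖waveKernel φ t x‖ ≤ C * |t| ^ (-(((finrank ℝ E : ℝ) - 1) / 2)) := by
  set A : ℝ := ∫ κ : E, ‖φ ‖κ‖‖
  have hA : 0 ≤ A := integral_nonneg fun _ => norm_nonneg _
  have htrivial : ∀ (t : ℝ) (x : E), 1 ≤ |t| ^ (-(((finrank ℝ E : ℝ) - 1) / 2)) →
      ‖waveKernel φ t x‖ ≤ A * |t| ^ (-(((finrank ℝ E : ℝ) - 1) / 2)) := fun t x h =>
    (norm_waveKernel_le φ t x).trans (le_mul_of_one_le_right hA h)
  rcases lt_trichotomy (finrank ℝ E) 1 with hE1 | hE1 | hE1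
  · have : Subsingleton E := finrank_zero_iff.1 (Nat.lt_one_iff.1 hE1)
    have hzero : φ 0 = 0 := image_eq_zero_of_notMem_tsupport fun h => lt_irrefl (0 : ℝ) (hφ0 h)
    refine ⟨1, one_pos, fun t x _ => (norm_waveKernel_le φ t x).trans ?_⟩
    simp only [Subsingleton.elim _ (0 : E), norm_zero, hzero, integral_zero]
    positivity
  · refine ⟨A + 1, by positivity, fun t x _ => (htrivial t x ?_).trans (by gcongr; simp)⟩
    simp [hE1]
  · obtain ⟨C, hC0, hC⟩ := exists_norm_waveKernel_le_of_one_le_abs hφ hφc hφ0 hE1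
    refine ⟨A + C + 1, by positivity, fun t x ht => ?_⟩
    rcases le_total |t| 1 with ht1 | ht1
    · have hn : (1 : ℝ) < finrank ℝ E := mod_cast hE1
      refine (htrivial t x ?_).trans (by gcongr; linarith)
      exact Real.one_le_rpow_of_pos_of_le_one_of_nonpos (abs_pos.2 ht) ht1 (by linarith)
    · exact (hC t x ht1).trans (by gcongr; linarith)

theorem waveKernel_comp_inv_mul {R : ℝ} (hR : 0 < R) (φ : ℝ → ℂ) (t : ℝ) (x : E) :
    waveKernel (fun u => φ (R⁻¹ * u)) t x = R ^ finrank ℝ E * waveKernel φ (R * t) (R • x) := by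
  have hscale := Measure.integral_comp_inv_smul_of_nonneg volume
    (fun κ : E => cexp (I * ((⟪R • x, κ⟫ : ℂ) + (R * t : ℝ) * ‖κ‖)) * φ ‖κ‖) hR.le
  rw [real_smul, Complex.ofReal_pow] at hscale
  rw [waveKernel, waveKernel, ← hscale]
  refine integral_congr_ae (.of_forall fun κ => ?_)
  have hR' : (R : ℂ) ≠ 0 := Complex.ofReal_ne_zero.2 hR.ne'
  simp only [norm_smul, norm_inv, Real.norm_of_nonneg hR.le, real_inner_smul_left,
    real_inner_smul_right]
  push_cast
  field_simp

theorem exists_norm_waveKernel_comp_inv_mul_le (hφ : ContDiff ℝ ∞ φ) (hφc : HasCompactSupport φ)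
    (hφ0 : tsupport φ ⊆ Ioi 0) :
    ∃ C : ℝ, 0 < C ∧ ∀ (R t : ℝ) (x : E), 0 < R → t ≠ 0 →
      ‖waveKernel (fun u => φ (R⁻¹ * u)) t x‖ ≤
        C * |t| ^ (-(((finrank ℝ E : ℝ) - 1) / 2)) * R ^ (((finrank ℝ E : ℝ) + 1) / 2) := by
  obtain ⟨C, hC0, hC⟩ := exists_norm_waveKernel_le (E := E) hφ hφc hφ0
  refine ⟨C, hC0, fun R t x hR ht => ?_⟩
  have hpow : R ^ finrank ℝ E * R ^ (-(((finrank ℝ E : ℝ) - 1) / 2)) =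
      R ^ (((finrank ℝ E : ℝ) + 1) / 2) := by
    rw [← Real.rpow_natCast, ← Real.rpow_add hR]
    ring_nf
  calc ‖waveKernel (fun u => φ (R⁻¹ * u)) t x‖
      = R ^ finrank ℝ E * ‖waveKernel φ (R * t) (R • x)‖ := by
        rw [waveKernel_comp_inv_mul hR, norm_mul, norm_pow, norm_real, Real.norm_of_nonneg hR.le]
    _ ≤ R ^ finrank ℝ E * (C * |R * t| ^ (-(((finrank ℝ E : ℝ) - 1) / 2))) := by
        gcongr
        exact hC _ _ (mul_ne_zero hR.ne' ht)
    _ = C * |t| ^ (-(((finrank ℝ E : ℝ) - 1) / 2)) * R ^ (((finrank ℝ E : ℝ) + 1) / 2) := by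
        rw [abs_mul, abs_of_pos hR, Real.mul_rpow hR.le (abs_nonneg t), ← hpow]
        ring

end WaveKernel

section FourierMultiplier

variable {E : Type*} [NormedAddCommGroup E] [InnerProductSpace ℝ E] [FiniteDimensional ℝ E]
  [MeasurableSpace E] [BorelSpace E] {m : E → ℂ}

theorem eLpNorm_fourier_two {H : Type*} [NormedAddCommGroup H] [InnerProductSpace ℂ H]
    [CompleteSpace H] (f : 𝓢(E, H)) : eLpNorm (𝓕 f : 𝓢(E, H)) 2 volume = eLpNorm f 2 volume :=
  (ENNReal.toReal_eq_toReal_iff' ((𝓕 f).memLp 2 volume).2.ne (f.memLp 2 volume).2.ne).1 <| by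
    rw [← SchwartzMap.norm_toLp, ← SchwartzMap.norm_toLp, SchwartzMap.norm_fourier_toL2_eq]

theorem eLpNorm_fourierMultiplierCLM_two_le {H : Type*} [NormedAddCommGroup H]
    [InnerProductSpace ℂ H] [CompleteSpace H] (hm : m.HasTemperateGrowth) {B : ℝ}
    (hB : ∀ ξ, ‖m ξ‖ ≤ B) (f : 𝓢(E, H)) :
    eLpNorm (SchwartzMap.fourierMultiplierCLM H m f) 2 volume ≤
      ENNReal.ofReal B * eLpNorm f 2 volume := by
  rw [← eLpNorm_fourier_two f, ← eLpNorm_fourier_two, SchwartzMap.fourierMultiplierCLM_apply,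
    FourierTransform.fourier_fourierInv_eq]
  refine eLpNorm_le_mul_eLpNorm_of_ae_le_mul (.of_forall fun ξ => ?_) 2
  rw [SchwartzMap.smulLeftCLM_apply_apply hm, norm_smul]
  gcongr
  exact hB ξ

theorem fourierMultiplierCLM_apply_eq_integral {F : Type*} [NormedAddCommGroup F]
    [NormedSpace ℂ F] [CompleteSpace F] (hm : m.HasTemperateGrowth) (hmi : Integrable m)
    (f : 𝓢(E, F)) (x : E) :
    SchwartzMap.fourierMultiplierCLM F m f x = ∫ y, 𝓕⁻ m (x - y) • f y := by
  have hmx : Integrable fun ξ => Real.fourierChar (inner ℝ ξ x) • m ξ :=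
    (Real.fourierIntegral_convergent_iff (-x)).2 hmi |>.congr (.of_forall fun ξ => by simp)
  have hflip := VectorFourier.integral_fourierIntegral_smul_eq_flip (L := innerₗ E)
    Real.continuous_fourierChar continuous_inner hmx (f.integrable (μ := volume))
  rw [SchwartzMap.fourierMultiplierCLM_apply, SchwartzMap.fourierInv_coe, Real.fourierInv_eq]
  simp only [SchwartzMap.smulLeftCLM_apply_apply hm, SchwartzMap.fourier_coe, ← smul_assoc]
  rw [flip_innerₗ] at hflip
  refine hflip.symm.trans (integral_congr_ae (.of_forall fun y => ?_))
  simp only [VectorFourier.fourierIntegral, Real.fourierInv_eq, innerₗ_apply_apply, inner_sub_right,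
    ← smul_assoc, smul_eq_mul, ← AddChar.map_add_eq_mul, neg_add_eq_sub]

theorem eLpNorm_fourierMultiplierCLM_top_le {F : Type*} [NormedAddCommGroup F]
    [NormedSpace ℂ F] [CompleteSpace F] (hm : m.HasTemperateGrowth) (hmi : Integrable m) {A : ℝ}
    (hA : ∀ y, ‖𝓕⁻ m y‖ ≤ A) (f : 𝓢(E, F)) :
    eLpNorm (SchwartzMap.fourierMultiplierCLM F m f) ∞ volume ≤
      ENNReal.ofReal A * eLpNorm f 1 volume := by
  rw [eLpNorm_exponent_top, eLpNorm_one_eq_lintegral_enorm,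
    ← lintegral_const_mul' _ _ ENNReal.ofReal_ne_top]
  refine eLpNormEssSup_le_of_ae_enorm_bound (.of_forall fun x => ?_)
  rw [fourierMultiplierCLM_apply_eq_integral hm hmi]
  refine (enorm_integral_le_lintegral_enorm _).trans (lintegral_mono fun y => ?_)
  rw [enorm_smul]
  gcongr
  exact (ofReal_norm _).symm.trans_le (ENNReal.ofReal_le_ofReal (hA (x - y)))

end FourierMultiplier

section WaveMultiplier

variable {E : Type*} [NormedAddCommGroup E] [InnerProductSpace ℝ E] {φ : ℝ → ℂ}

/-- The Fourier multiplier of the frequency-localized half-wave propagator. The factor `2π` is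
the frequency normalization of `𝓕`. -/
noncomputable def waveSymbol (φ : ℝ → ℂ) (t : ℝ) (ξ : E) : ℂ :=
  modulated φ t ‖(2 * Real.pi) • ξ‖

theorem contDiff_waveSymbol (hφ : ContDiff ℝ ∞ φ) (hφ0 : tsupport φ ⊆ Ioi 0) (t : ℝ) :
    ContDiff ℝ ∞ (waveSymbol φ t : E → ℂ) :=
  contDiff_comp_of_contDiffAt_on_tsupport (g := fun ξ : E => ‖(2 * Real.pi) • ξ‖)
    (contDiff_modulated hφ t) (continuous_const_smul _).norm fun _ hξ =>
      (contDiff_const_smul _).contDiffAt.norm ℝ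
        (norm_pos_iff.1 (hφ0 (tsupport_modulated_subset φ t hξ)))

theorem hasCompactSupport_waveSymbol [ProperSpace E] (hφc : HasCompactSupport φ) (t : ℝ) :
    HasCompactSupport (waveSymbol φ t : E → ℂ) := by
  obtain ⟨b, hb⟩ := (hasCompactSupport_modulated hφc t).isCompact.isBounded.subset_closedBall 0
  refine .intro (isCompact_closedBall 0 (b / (2 * Real.pi))) fun ξ hξ =>
    image_eq_zero_of_notMem_tsupport (f := modulated φ t) fun h => hξ ?_
  have hbound : ‖(2 * Real.pi) • ξ‖ ≤ b := by
    simpa only [mem_closedBall_zero_iff, norm_norm] using hb h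
  rw [norm_smul, Real.norm_of_nonneg Real.two_pi_pos.le] at hbound
  rwa [mem_closedBall_zero_iff, le_div_iff₀' Real.two_pi_pos]

theorem norm_waveSymbol (φ : ℝ → ℂ) (t : ℝ) (ξ : E) :
    ‖waveSymbol φ t ξ‖ = ‖φ ‖(2 * Real.pi) • ξ‖‖ :=
  norm_modulated _ _ _

theorem fourierInv_waveSymbol [FiniteDimensional ℝ E] [MeasurableSpace E] [BorelSpace E]
    (φ : ℝ → ℂ) (t : ℝ) (x : E) :
    𝓕⁻ (waveSymbol φ t : E → ℂ) x =
      ((2 * Real.pi) ^ (-(finrank ℝ E : ℝ)) : ℝ) * waveKernel φ t x := by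
  have hscale := Measure.integral_comp_smul_of_nonneg volume
    (fun κ : E => cexp (I * ((⟪x, κ⟫ : ℂ) + t * ‖κ‖)) * φ ‖κ‖) (2 * Real.pi)
    (hR := Real.two_pi_pos.le)
  rw [Real.rpow_neg Real.two_pi_pos.le, Real.rpow_natCast, waveKernel, ← real_smul, ← hscale,
    Real.fourierInv_eq']
  refine integral_congr_ae (.of_forall fun ξ => ?_)
  simp only [waveSymbol, modulated, smul_eq_mul, real_inner_smul_right, real_inner_comm x,
    Complex.exp_add, mul_add]
  push_cast
  ring_nf

theorem ftransform_two_pi_smul {d : ℕ} (g : Ed d → ℂ) (ξ : Ed d) :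
    ftransform d g ((2 * Real.pi) • ξ) = 𝓕 g ξ := by
  rw [Real.fourier_eq', ftransform]
  refine integral_congr_ae (.of_forall fun x => ?_)
  simp only [smul_eq_mul, real_inner_smul_right]
  push_cast
  ring_nf

theorem fourierMultiplierCLM_waveSymbol_apply {d : ℕ} (hφ : ContDiff ℝ ∞ φ)
    (hφc : HasCompactSupport φ) (hφ0 : tsupport φ ⊆ Ioi 0) (t : ℝ) (g : 𝓢(Ed d, ℂ)) (x : Ed d) :
    SchwartzMap.fourierMultiplierCLM ℂ (waveSymbol φ t) g x =
      ((2 * Real.pi) ^ (-(d : ℝ)) : ℝ) *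
        ∫ κ, cexp (I * ((⟪x, κ⟫ : ℂ) + t * ‖κ‖)) * φ ‖κ‖ * ftransform d g κ := by
  have hm : (waveSymbol φ t : Ed d → ℂ).HasTemperateGrowth :=
    (hasCompactSupport_waveSymbol hφc t).hasTemperateGrowth (contDiff_waveSymbol hφ hφ0 t)
  have hscale := Measure.integral_comp_smul_of_nonneg volume (fun κ : Ed d =>
    cexp (I * ((⟪x, κ⟫ : ℂ) + t * ‖κ‖)) * φ ‖κ‖ * ftransform d g κ) (2 * Real.pi)
    (hR := Real.two_pi_pos.le)
  rw [finrank_euclideanSpace_fin] at hscale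
  rw [Real.rpow_neg Real.two_pi_pos.le, Real.rpow_natCast, ← real_smul, ← hscale,
    SchwartzMap.fourierMultiplierCLM_apply, SchwartzMap.fourierInv_coe, Real.fourierInv_eq']
  refine integral_congr_ae (.of_forall fun ξ => ?_)
  simp only [SchwartzMap.smulLeftCLM_apply_apply hm, SchwartzMap.fourier_coe,
    ftransform_two_pi_smul, waveSymbol, modulated, smul_eq_mul, real_inner_smul_right,
    real_inner_comm x, Complex.exp_add, mul_add]
  push_cast
  ring_nf

end WaveMultiplier

section Interpolation

theorem exists_add_eq_and_enorm_le_indicator {E F : Type*} [NormedAddCommGroup E]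
    [NormedSpace ℝ E] [ProperSpace E] [NormedAddCommGroup F] [NormedSpace ℝ F]
    [HasContDiffBump F] (g : 𝓢(E, F)) {s : ℝ} (hs : 0 < s) :
    ∃ g₁ g₂ : 𝓢(E, F), g₁ + g₂ = g ∧
      (∀ x, ‖g₁ x‖ₑ ≤ {x | s < ‖g x‖}.indicator (‖g ·‖ₑ) x) ∧
      ∀ x, ‖g₂ x‖ₑ ≤ {x | ‖g x‖ < 2 * s}.indicator (‖g ·‖ₑ) x := by
  let χ : ContDiffBump (0 : F) := ⟨s, 2 * s, hs, by linarith⟩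
  have hχ : ContDiff ℝ ∞ fun x => (1 - χ (g x)) • g x :=
    (contDiff_const.sub (χ.contDiff.comp (g.smooth _))).smul (g.smooth _)
  have hsmall : ∀ x, ‖g x‖ ≤ s → χ (g x) = 1 := fun x hx =>
    χ.one_of_mem_closedBall (mem_closedBall_zero_iff.2 hx)
  obtain ⟨K, hK, hgK⟩ := Filter.mem_cocompact.1
    (g.tendsto_cocompact (Metric.closedBall_mem_nhds (0 : F) hs))
  have hχc : HasCompactSupport fun x => (1 - χ (g x)) • g x := .intro hK fun x hx => by
    rw [hsmall x (mem_closedBall_zero_iff.1 (hgK hx)), sub_self, zero_smul]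
  have hle : ∀ (a : ℝ) (y : F), a ∈ Icc 0 1 → ‖a • y‖ₑ ≤ ‖y‖ₑ := fun a y ha => by
    rw [enorm_le_iff_norm_le, norm_smul, Real.norm_of_nonneg ha.1]
    exact mul_le_of_le_one_left (norm_nonneg y) ha.2
  refine ⟨hχc.toSchwartzMap hχ, g - hχc.toSchwartzMap hχ, add_sub_cancel _ _, fun x => ?_,
    fun x => ?_⟩
  · rcases le_or_gt ‖g x‖ s with hx | hx
    · simp [hsmall x hx]
    · rw [indicator_of_mem (show x ∈ {x | s < ‖g x‖} from hx)]
      exact hle _ _ ⟨sub_nonneg.2 χ.le_one, sub_le_self _ χ.nonneg⟩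
  · have hg₂ : (g - hχc.toSchwartzMap hχ) x = χ (g x) • g x := by simp [sub_smul]
    rw [hg₂]
    rcases le_or_gt (2 * s) ‖g x‖ with hx | hx
    · rw [χ.zero_of_le_dist (hx.trans_eq (dist_zero_right _).symm), zero_smul, enorm_zero]
      exact zero_le
    · rw [indicator_of_mem (show x ∈ {x | ‖g x‖ < 2 * s} from hx)]
      exact hle _ _ ⟨χ.nonneg, χ.le_one⟩

theorem enorm_le_ofReal_rpow_mul_enorm_rpow {F : Type*} [SeminormedAddGroup F] {s r : ℝ}
    (hs : 0 < s) (hr : 1 ≤ r) {y : F} (hy : s ≤ ‖y‖) :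
    ‖y‖ₑ ≤ ENNReal.ofReal (s ^ (1 - r)) * ‖y‖ₑ ^ r := by
  have hy0 : 0 < ‖y‖ := hs.trans_le hy
  rw [← ofReal_norm, ENNReal.ofReal_rpow_of_pos hy0, ← ENNReal.ofReal_mul (by positivity)]
  refine ENNReal.ofReal_le_ofReal ?_
  calc ‖y‖ = ‖y‖ ^ (1 - r) * ‖y‖ ^ r := by rw [← Real.rpow_add hy0, sub_add_cancel, Real.rpow_one]
    _ ≤ s ^ (1 - r) * ‖y‖ ^ r := by
      gcongr ?_ * _
      exact Real.rpow_le_rpow_of_nonpos hs hy (sub_nonpos.2 hr)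

theorem lintegral_rpow_le_of_forall_meas_lt_le {α β : Type*} [MeasurableSpace α]
    [MeasurableSpace β] {ν : Measure α} {ρ : Measure β} {u : α → ℝ} {L : β → ℝ} (hu : 0 ≤ᵐ[ν] u)
    (hum : AEMeasurable u ν) (hL : 0 ≤ᵐ[ρ] L) (hLm : AEMeasurable L ρ) {k q : ℝ} (hq : 0 < q)
    (hk : k < q) {K : ℝ≥0∞} (hK : K ≠ ⊤)
    (h : ∀ l, 0 < l → ν {x | l < u x} ≤ K * ENNReal.ofReal (l ^ (-k)) * ρ {y | l < L y}) :
    ∫⁻ x, ENNReal.ofReal (u x ^ q) ∂ν ≤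
      K * ENNReal.ofReal (q / (q - k)) * ∫⁻ y, ENNReal.ofReal (L y ^ (q - k)) ∂ρ := by
  have hqk : 0 < q - k := sub_pos.2 hk
  rw [lintegral_rpow_eq_lintegral_meas_lt_mul ν hu hum hq,
    lintegral_rpow_eq_lintegral_meas_lt_mul ρ hL hLm hqk]
  calc ENNReal.ofReal q * ∫⁻ l in Ioi 0, ν {x | l < u x} * ENNReal.ofReal (l ^ (q - 1))
      ≤ ENNReal.ofReal q *
          ∫⁻ l in Ioi 0, K * (ρ {y | l < L y} * ENNReal.ofReal (l ^ (q - k - 1))) := by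
        refine mul_le_mul_right (setLIntegral_mono' measurableSet_Ioi fun l hl => ?_) _
        have hpow : l ^ (q - k - 1) = l ^ (-k) * l ^ (q - 1) := by
          rw [← Real.rpow_add hl]
          ring_nf
        rw [hpow, ENNReal.ofReal_mul (Real.rpow_nonneg (le_of_lt hl) _)]
        exact (mul_le_mul_left (h l hl) _).trans_eq (by ring)
    _ = _ := by
      rw [lintegral_const_mul' _ _ hK, ← div_mul_cancel₀ q hqk.ne',
        ENNReal.ofReal_mul (by positivity), div_mul_cancel₀ q hqk.ne']
      ring

/-- A sublinear operator `T` on Schwartz functions of strong type `(1, ∞)` with constant `A` and of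
strong type `(2, 2)` with constant `B`, the hypothesis of the interpolation theorem below. -/
structure IsSublinearOfStrongTypes {E F G α : Type*} [NormedAddCommGroup E] [NormedSpace ℝ E]
    [MeasurableSpace E] [NormedAddCommGroup F] [NormedSpace ℝ F] [MeasurableSpace α]
    [NormedAddCommGroup G] (T : 𝓢(E, F) → α → G) (μ : Measure E) (ν : Measure α) (A B : ℝ≥0) :
    Prop where
  norm_add_le : ∀ f g, ∀ᵐ x ∂ν, ‖T (f + g) x‖ ≤ ‖T f x‖ + ‖T g x‖
  aestronglyMeasurable : ∀ f, AEStronglyMeasurable (T f) ν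
  eLpNorm_top_le : ∀ f, eLpNorm (T f) ∞ ν ≤ A * eLpNorm f 1 μ
  eLpNorm_two_le : ∀ f, eLpNorm (T f) 2 ν ≤ B * eLpNorm f 2 μ

theorem eLpNorm_two_sq_le_setLIntegral {E F G : Type*} [MeasurableSpace E] {μ : Measure E}
    [NormedAddCommGroup F] [NormedAddCommGroup G] {f : E → F} {g : E → G} {s : Set E}
    (hs : MeasurableSet s) (hfg : ∀ x, ‖f x‖ₑ ≤ s.indicator (‖g ·‖ₑ) x) :
    eLpNorm f 2 μ ^ 2 ≤ ∫⁻ x in s, ‖g x‖ₑ ^ 2 ∂μ := by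
  have hsq : eLpNorm g 2 (μ.restrict s) ^ 2 = ∫⁻ x in s, ‖g x‖ₑ ^ 2 ∂μ := by
    simpa using eLpNorm_nnreal_pow_eq_lintegral (p := 2) (f := g) (μ := μ.restrict s) two_ne_zero
  rw [← hsq, ← eLpNorm_indicator_eq_eLpNorm_restrict hs]
  gcongr
  refine eLpNorm_mono_enorm fun x => (hfg x).trans_eq ?_
  rw [enorm_indicator_eq_indicator_enorm]

variable {E F G α : Type*} [NormedAddCommGroup E] [NormedSpace ℝ E] [ProperSpace E]
  [MeasurableSpace E] [OpensMeasurableSpace E] {μ : Measure E}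
  [NormedAddCommGroup F] [NormedSpace ℝ F] [HasContDiffBump F]
  [MeasurableSpace α] {ν : Measure α} [NormedAddCommGroup G] {T : 𝓢(E, F) → α → G} {A B : ℝ≥0}

theorem inv_ofReal_half_sq {l : ℝ} (hl : 0 < l) :
    (ENNReal.ofReal (l / 2))⁻¹ ^ 2 = 4 * ENNReal.ofReal (l ^ (-2 : ℝ)) := by
  rw [← ENNReal.ofReal_inv_of_pos (by positivity), ← ENNReal.ofReal_pow (by positivity),
    ← ENNReal.ofReal_ofNat 4, ← ENNReal.ofReal_mul (by positivity), Real.rpow_neg hl.le,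
    Real.rpow_two]
  congr 1
  field_simp
  norm_num

theorem IsSublinearOfStrongTypes.meas_lt_norm_le
    (hT : IsSublinearOfStrongTypes T μ ν A B) (g : 𝓢(E, F)) {s l r : ℝ} (hs : 0 < s)
    (hl : 0 < l) (hr : 1 ≤ r)
    (hsl : A * (ENNReal.ofReal (s ^ (1 - r)) * ∫⁻ x, ‖g x‖ₑ ^ r ∂μ) ≤ ENNReal.ofReal (l / 2)) :
    ν {x | l < ‖T g x‖} ≤ 4 * (B : ℝ≥0∞) ^ 2 * ENNReal.ofReal (l ^ (-2 : ℝ)) *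
      ∫⁻ x in {x | ‖g x‖ < 2 * s}, ‖g x‖ₑ ^ 2 ∂μ := by
  obtain ⟨g₁, g₂, rfl, hg₁, hg₂⟩ := exists_add_eq_and_enorm_le_indicator g hs
  set g := g₁ + g₂
  have hlarge : eLpNorm g₁ 1 μ ≤ ENNReal.ofReal (s ^ (1 - r)) * ∫⁻ x, ‖g x‖ₑ ^ r ∂μ := by
    rw [eLpNorm_one_eq_lintegral_enorm, ← lintegral_const_mul' _ _ ENNReal.ofReal_ne_top]
    exact lintegral_mono fun x => (hg₁ x).trans <| indicator_apply_le' (fun hx =>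
      enorm_le_ofReal_rpow_mul_enorm_rpow hs hr (le_of_lt hx)) fun _ => zero_le
  have hTlarge : ∀ᵐ x ∂ν, ‖T g₁ x‖ ≤ l / 2 := by
    filter_upwards [enorm_ae_le_eLpNormEssSup (T g₁) ν] with x hx
    rw [← eLpNorm_exponent_top] at hx
    rw [← ENNReal.ofReal_le_ofReal_iff (by positivity), ofReal_norm]
    exact hx.trans ((hT.eLpNorm_top_le g₁).trans ((mul_le_mul_right hlarge _).trans hsl))
  have hsmall : eLpNorm g₂ 2 μ ^ 2 ≤ ∫⁻ x in {x | ‖g x‖ < 2 * s}, ‖g x‖ₑ ^ 2 ∂μ :=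
    eLpNorm_two_sq_le_setLIntegral
      (isOpen_lt g.continuous.norm continuous_const).measurableSet hg₂
  have hsub : ν {x | l < ‖T g x‖} ≤ ν {x | ENNReal.ofReal (l / 2) ≤ ‖T g₂ x‖ₑ} := by
    refine measure_mono_ae ?_
    filter_upwards [hT.norm_add_le g₁ g₂, hTlarge] with x hx hx₁ hlx
    have hlx : l < ‖T g x‖ := hlx
    change ENNReal.ofReal (l / 2) ≤ ‖T g₂ x‖ₑ
    rw [← ofReal_norm]
    exact ENNReal.ofReal_le_ofReal (by linarith)
  calc ν {x | l < ‖T g x‖}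
      ≤ (ENNReal.ofReal (l / 2))⁻¹ ^ 2 * eLpNorm (T g₂) 2 ν ^ 2 := by
        refine hsub.trans ?_
        simpa using meas_ge_le_mul_pow_eLpNorm_enorm ν two_ne_zero ENNReal.ofNat_ne_top
          (hT.aestronglyMeasurable g₂) (ENNReal.ofReal_pos.2 (half_pos hl)).ne' (by simp)
    _ ≤ (ENNReal.ofReal (l / 2))⁻¹ ^ 2 *
          (B ^ 2 * ∫⁻ x in {x | ‖g x‖ < 2 * s}, ‖g x‖ₑ ^ 2 ∂μ) := by
        gcongr
        exact (pow_le_pow_left₀ zero_le (hT.eLpNorm_two_le g₂) 2).trans (by rw [mul_pow]; gcongr)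
    _ = _ := by
        rw [inv_ofReal_half_sq hl]
        ring

theorem lt_mul_div_two_rpow_of_lt_two_mul_div_rpow {q c l y : ℝ} (hq : 1 < q) (hc : 0 < c)
    (hl : 0 < l) (hy : 0 < y) (h : y < 2 * (c / l) ^ (q - 1)) :
    l < c * (y / 2) ^ (-(q - 1)⁻¹) := by
  have hq1 : 0 < q - 1 := sub_pos.2 hq
  have hcl : (y / 2) ^ (q - 1)⁻¹ < c / l := by
    rw [Real.rpow_inv_lt_iff_of_pos (by positivity) (by positivity) hq1]
    linarith
  rw [Real.rpow_neg (by positivity), ← div_eq_mul_inv, lt_div_comm₀ hl (by positivity)]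
  exact hcl

theorem mul_div_two_rpow_rpow_mul_sq {q c y : ℝ} (hq : 1 < q) (hc : 0 ≤ c) (hy : 0 < y) :
    (c * (y / 2) ^ (-(q - 1)⁻¹)) ^ (q - 2) * y ^ 2 =
      c ^ (q - 2) * 2 ^ ((q - 2) / (q - 1)) * y ^ (q / (q - 1)) := by
  have hq1 : q - 1 ≠ 0 := (sub_pos.2 hq).ne'
  have hexp : q / (q - 1) = -((q - 2) / (q - 1)) + 2 := by
    field_simp
    ring
  have hmul : -(q - 1)⁻¹ * (q - 2) = -((q - 2) / (q - 1)) := by ring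
  rw [Real.mul_rpow hc (by positivity), ← Real.rpow_mul (by positivity), hmul,
    Real.div_rpow hy.le zero_le_two, hexp, Real.rpow_add hy, Real.rpow_two,
    Real.rpow_neg zero_le_two, div_inv_eq_mul]
  ring

theorem lintegral_enorm_rpow_le_of_meas_lt_norm_le {E F G α : Type*} [MeasurableSpace E]
    {μ : Measure E} [NormedAddCommGroup F] [MeasurableSpace α] {ν : Measure α}
    [NormedAddCommGroup G] {u : α → G} (hu : AEStronglyMeasurable u ν) {g : E → F}
    (hg : StronglyMeasurable g) {q c : ℝ} (hq : 2 < q) (hc : 0 < c) {K : ℝ≥0∞} (hK : K ≠ ⊤)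
    (h : ∀ l, 0 < l → ν {x | l < ‖u x‖} ≤ K * ENNReal.ofReal (l ^ (-2 : ℝ)) *
      ∫⁻ x in {x | ‖g x‖ < 2 * (c / l) ^ (q - 1)}, ‖g x‖ₑ ^ 2 ∂μ) :
    ∫⁻ x, ‖u x‖ₑ ^ q ∂ν ≤
      K * ENNReal.ofReal (q / (q - 2) * c ^ (q - 2) * 2 ^ ((q - 2) / (q - 1))) *
        ∫⁻ x, ‖g x‖ₑ ^ (q / (q - 1)) ∂μ := by
  have hq0 : 0 < q := by linarith
  have hq1 : 0 < q - 1 := by linarith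
  have hgm : Measurable fun x => ‖g x‖ₑ ^ 2 := hg.enorm.pow_const 2
  set ρ := μ.withDensity fun x => ‖g x‖ₑ ^ 2
  let L : E → ℝ := fun x => c * (‖g x‖ / 2) ^ (-(q - 1)⁻¹)
  have hL : ∀ x, 0 ≤ L x := fun x => by positivity
  have hLm : Measurable L := ((hg.norm.measurable.div_const 2).pow_const _).const_mul c
  have hg0 : ∀ᵐ x ∂ρ, 0 < ‖g x‖ := (ae_withDensity_iff hgm).2 <| .of_forall fun x hx =>
    norm_pos_iff.2 fun hgx => hx (by simp [hgx])
  have hlevel : ∀ l, 0 < l → ∫⁻ x in {x | ‖g x‖ < 2 * (c / l) ^ (q - 1)}, ‖g x‖ₑ ^ 2 ∂μ ≤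
      ρ {x | l < L x} := fun l hl => by
    refine (withDensity_apply_le _ _).trans (measure_mono_ae ?_)
    filter_upwards [hg0] with x hx hlt
    exact lt_mul_div_two_rpow_of_lt_two_mul_div_rpow (by linarith) hc hl hx hlt
  have hdensity : ∀ x, ‖g x‖ₑ ^ 2 * ENNReal.ofReal (L x ^ (q - 2)) =
      ENNReal.ofReal (c ^ (q - 2) * 2 ^ ((q - 2) / (q - 1))) * ‖g x‖ₑ ^ (q / (q - 1)) := fun x => by
    rcases (norm_nonneg (g x)).eq_or_lt with hx | hx
    · simp [norm_eq_zero.1 hx.symm, ENNReal.zero_rpow_of_pos (div_pos hq0 hq1)]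
    · rw [← ofReal_norm, ENNReal.ofReal_rpow_of_pos hx, ← ENNReal.ofReal_pow hx.le,
        ← ENNReal.ofReal_mul (by positivity), ← ENNReal.ofReal_mul (by positivity), mul_comm,
        mul_div_two_rpow_rpow_mul_sq (by linarith) hc.le hx]
  calc ∫⁻ x, ‖u x‖ₑ ^ q ∂ν
      = ∫⁻ x, ENNReal.ofReal (‖u x‖ ^ q) ∂ν := by
        simp only [← ofReal_norm, ENNReal.ofReal_rpow_of_nonneg (norm_nonneg _) hq0.le]
    _ ≤ K * ENNReal.ofReal (q / (q - 2)) * ∫⁻ x, ENNReal.ofReal (L x ^ (q - 2)) ∂ρ :=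
        lintegral_rpow_le_of_forall_meas_lt_le (.of_forall fun x => norm_nonneg _)
          hu.norm.aemeasurable (.of_forall hL) hLm.aemeasurable hq0 hq hK fun l hl =>
          (h l hl).trans (by gcongr; exact hlevel l hl)
    _ = _ := by
        rw [lintegral_withDensity_eq_lintegral_mul _ hgm (by fun_prop)]
        simp only [Pi.mul_apply, hdensity]
        rw [lintegral_const_mul' _ _ ENNReal.ofReal_ne_top, ← mul_assoc, mul_assoc K,
          ← ENNReal.ofReal_mul (by have := sub_pos.2 hq; positivity), ← mul_assoc (q / (q - 2))]

theorem IsSublinearOfStrongTypes.lintegral_enorm_rpow_le_of_mul_lintegral_le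
    (hT : IsSublinearOfStrongTypes T μ ν A B) {q : ℝ} (hq : 2 < q) (g : 𝓢(E, F)) {c : ℝ}
    (hc : 0 < c) (hcA : A * ∫⁻ x, ‖g x‖ₑ ^ (q / (q - 1)) ∂μ ≤ ENNReal.ofReal (c / 2)) :
    ∫⁻ x, ‖T g x‖ₑ ^ q ∂ν ≤
      4 * (B : ℝ≥0∞) ^ 2 * ENNReal.ofReal (q / (q - 2) * c ^ (q - 2) * 2 ^ ((q - 2) / (q - 1))) *
        ∫⁻ x, ‖g x‖ₑ ^ (q / (q - 1)) ∂μ := by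
  have hq1 : 0 < q - 1 := by linarith
  refine lintegral_enorm_rpow_le_of_meas_lt_norm_le (hT.aestronglyMeasurable g)
    g.continuous.stronglyMeasurable hq hc (by finiteness) fun l hl =>
    hT.meas_lt_norm_le g (r := q / (q - 1)) (by positivity) hl
      ((one_le_div hq1).2 (by linarith)) ?_
  have hpow : ((c / l) ^ (q - 1)) ^ (1 - q / (q - 1)) = l / c := by
    have hexp : (q - 1) * (1 - q / (q - 1)) = -1 := by
      field_simp
      ring
    rw [← Real.rpow_mul (by positivity), hexp, Real.rpow_neg_one, inv_div]
  rw [hpow]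
  calc A * (ENNReal.ofReal (l / c) * ∫⁻ x, ‖g x‖ₑ ^ (q / (q - 1)) ∂μ)
      = ENNReal.ofReal (l / c) * (A * ∫⁻ x, ‖g x‖ₑ ^ (q / (q - 1)) ∂μ) := by ring
    _ ≤ ENNReal.ofReal (l / c) * ENNReal.ofReal (c / 2) := by gcongr
    _ = ENNReal.ofReal (l / 2) := by
        rw [← ENNReal.ofReal_mul (by positivity), div_mul_div_cancel₀ hc.ne']

theorem ae_eq_zero_of_eLpNorm_top_le_mul_eLpNorm_one {E F G α : Type*} [MeasurableSpace E]
    {μ : Measure E} [NormedAddCommGroup F] [MeasurableSpace α] {ν : Measure α}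
    [NormedAddCommGroup G] {u : α → G} (hu : AEStronglyMeasurable u ν) {g : E → F}
    (hg : AEStronglyMeasurable g μ) {A r : ℝ≥0∞} (hr : r ≠ 0)
    (hA : eLpNorm u ∞ ν ≤ A * eLpNorm g 1 μ) (h0 : A * eLpNorm g r μ = 0) : u =ᵐ[ν] 0 := by
  rw [← eLpNorm_eq_zero_iff hu ENNReal.top_ne_zero, ← nonpos_iff_eq_zero]
  refine hA.trans_eq (mul_eq_zero.2 ((mul_eq_zero.1 h0).imp_right fun h => ?_))
  rwa [eLpNorm_eq_zero_iff hg one_ne_zero, ← eLpNorm_eq_zero_iff hg hr]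

theorem IsSublinearOfStrongTypes.lintegral_enorm_rpow_le_mul_rpow
    (hT : IsSublinearOfStrongTypes T μ ν A B) {q : ℝ} (hq : 2 < q) (g : 𝓢(E, F))
    {N : ℝ≥0∞} (hN : ∫⁻ x, ‖g x‖ₑ ^ (q / (q - 1)) ∂μ = N) (hAN0 : A * N ≠ 0) (hNtop : N ≠ ⊤) :
    ∫⁻ x, ‖T g x‖ₑ ^ q ∂ν ≤
      ENNReal.ofReal (4 * (q / (q - 2)) * 2 ^ (q - 2) * 2 ^ ((q - 2) / (q - 1))) *
        (A : ℝ≥0∞) ^ (q - 2) * (B : ℝ≥0∞) ^ 2 * N ^ (q - 1) := by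
  have hq2 : 0 < q - 2 := sub_pos.2 hq
  have hAN : A * N ≠ ⊤ := ENNReal.mul_ne_top ENNReal.coe_ne_top hNtop
  have hAN_pos : 0 < (A * N).toReal := ENNReal.toReal_pos hAN0 hAN
  have hbound := hT.lintegral_enorm_rpow_le_of_mul_lintegral_le hq g
    (c := 2 * (A * N).toReal) (by positivity)
    (by rw [hN, mul_div_cancel_left₀ _ two_ne_zero, ENNReal.ofReal_toReal hAN])
  refine hbound.trans_eq ?_
  have hc : ENNReal.ofReal ((2 * (A * N).toReal) ^ (q - 2)) =
      ENNReal.ofReal (2 ^ (q - 2)) * ((A : ℝ≥0∞) ^ (q - 2) * N ^ (q - 2)) := by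
    rw [Real.mul_rpow zero_le_two hAN_pos.le, ENNReal.ofReal_mul (by positivity),
      ← ENNReal.ofReal_rpow_of_pos hAN_pos, ENNReal.ofReal_toReal hAN,
      ENNReal.mul_rpow_of_nonneg _ _ hq2.le]
  have hNpow : N ^ (q - 1) = N ^ (q - 2) * N := by
    rw [show q - 1 = q - 2 + 1 by ring, ENNReal.rpow_add_of_nonneg _ _ hq2.le zero_le_one,
      ENNReal.rpow_one]
  have : 0 < q := by linarith
  rw [hN, hNpow, ENNReal.ofReal_mul (by positivity), ENNReal.ofReal_mul (by positivity), hc,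
    ENNReal.ofReal_mul (by positivity), ENNReal.ofReal_mul (by positivity),
    ENNReal.ofReal_mul (by positivity), ENNReal.ofReal_ofNat]
  ring

theorem IsSublinearOfStrongTypes.eLpNorm_le [μ.HasTemperateGrowth]
    (hT : IsSublinearOfStrongTypes T μ ν A B) {q q' : ℝ≥0} (hqq' : q.HolderConjugate q')
    (hq : 2 < q) (g : 𝓢(E, F)) :
    eLpNorm (T g) q ν ≤
      ENNReal.ofReal ((4 * (q / (q - 2)) * 2 ^ ((q : ℝ) - 2) * 2 ^ ((q - 2) / (q - 1) : ℝ)) ^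
        (q⁻¹ : ℝ)) *
        (A : ℝ≥0∞) ^ (1 - 2 * (q : ℝ)⁻¹) * (B : ℝ≥0∞) ^ (2 * (q : ℝ)⁻¹) * eLpNorm g q' μ := by
  have hq0 : (0 : ℝ) < q := hqq'.coe.pos
  have hq2 : (2 : ℝ) < q := mod_cast hq
  have hgm : AEStronglyMeasurable g μ := g.continuous.stronglyMeasurable.aestronglyMeasurable
  by_cases h0 : A * eLpNorm g q' μ = 0
  · have hTg := ae_eq_zero_of_eLpNorm_top_le_mul_eLpNorm_one (hT.aestronglyMeasurable g) hgm
      (mod_cast hqq'.symm.ne_zero) (hT.eLpNorm_top_le g) h0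
    rw [eLpNorm_congr_ae hTg, eLpNorm_zero]
    exact zero_le
  have hAg := mul_ne_zero_iff.1 h0
  have hN : ∫⁻ x, ‖g x‖ₑ ^ ((q : ℝ) / (q - 1)) ∂μ = eLpNorm g q' μ ^ (q' : ℝ) := by
    rw [eLpNorm_nnreal_pow_eq_lintegral hqq'.symm.ne_zero, hqq'.coe.conjugate_eq]
  have hbound := hT.lintegral_enorm_rpow_le_mul_rpow hq2 g hN
    (mul_ne_zero hAg.1 (by simp [hAg.2]))
    (ENNReal.rpow_ne_top_of_nonneg q'.coe_nonneg (g.eLpNorm_lt_top _ _).ne)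
  have hqsub : (q' : ℝ) * (q - 1) = q := by
    rw [mul_comm, hqq'.coe.sub_one_mul_conj]
  rw [← eLpNorm_nnreal_pow_eq_lintegral hqq'.ne_zero, ← ENNReal.rpow_mul, hqsub,
    ← ENNReal.le_rpow_inv_iff hq0] at hbound
  refine hbound.trans_eq ?_
  simp only [ENNReal.mul_rpow_of_nonneg _ _ (inv_nonneg.2 hq0.le), ← ENNReal.rpow_mul]
  rw [ENNReal.ofReal_rpow_of_pos (by have := sub_pos.2 hq2; positivity), ← ENNReal.rpow_ofNat,
    ← ENNReal.rpow_mul, mul_inv_cancel₀ hq0.ne', ENNReal.rpow_one, sub_mul, mul_inv_cancel₀ hq0.ne']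

theorem exists_eLpNorm_le_of_isSublinearOfStrongTypes [μ.HasTemperateGrowth]
    {p p' : ℝ≥0∞} [p.HolderConjugate p'] (hp : 2 ≤ p) :
    ∃ C : ℝ≥0, ∀ (T : 𝓢(E, F) → α → G) (A B : ℝ≥0),
      IsSublinearOfStrongTypes T μ ν A B → ∀ g : 𝓢(E, F), eLpNorm (T g) p ν ≤
        C * (A : ℝ≥0∞) ^ (1 - 2 * p⁻¹.toReal) * (B : ℝ≥0∞) ^ (2 * p⁻¹.toReal) *
          eLpNorm g p' μ := by
  rcases eq_or_ne p ⊤ with rfl | hptop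
  · obtain rfl := ENNReal.HolderConjugate.unique ⊤ p' 1
    exact ⟨1, fun _ _ _ hT g => by simpa using hT.eLpNorm_top_le g⟩
  rcases hp.eq_or_lt with rfl | hp
  · obtain rfl := ENNReal.HolderConjugate.unique 2 p' 2
    exact ⟨1, fun _ _ _ hT g => by simpa using hT.eLpNorm_two_le g⟩
  lift p to ℝ≥0 using hptop
  have hp'top : p' ≠ ⊤ := by
    rintro rfl
    simp [ENNReal.HolderConjugate.unique ⊤ p 1] at hp
  lift p' to ℝ≥0 using hp'top
  have hp2 : 2 < p := mod_cast hp
  have hpp' : p.HolderConjugate p' := by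
    simpa using ENNReal.HolderConjugate.toNNReal (p := p) (q := p')
      (by simpa using one_lt_two.trans hp2)
  have hinv : (p : ℝ≥0∞)⁻¹.toReal = (p : ℝ)⁻¹ := by simp
  rw [hinv]
  exact ⟨_, fun _ _ _ hT g => hT.eLpNorm_le hpp' hp2 g⟩

end Interpolation

section DispersiveEstimate

theorem isSublinearOfStrongTypes_fourierMultiplierCLM {E H : Type*} [NormedAddCommGroup E]
    [InnerProductSpace ℝ E] [FiniteDimensional ℝ E] [MeasurableSpace E] [BorelSpace E]
    [NormedAddCommGroup H] [InnerProductSpace ℂ H] [CompleteSpace H] {m : E → ℂ}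
    (hm : m.HasTemperateGrowth) (hmi : Integrable m) {A B : ℝ≥0} (hA : ∀ y, ‖𝓕⁻ m y‖ ≤ A)
    (hB : ∀ ξ, ‖m ξ‖ ≤ B) :
    IsSublinearOfStrongTypes (fun g : 𝓢(E, H) => ⇑(SchwartzMap.fourierMultiplierCLM H m g))
      volume volume A B where
  norm_add_le f g := .of_forall fun x => by
    rw [map_add]
    exact norm_add_le _ _
  aestronglyMeasurable f := (SchwartzMap.continuous _).aestronglyMeasurable
  eLpNorm_top_le f := by simpa using eLpNorm_fourierMultiplierCLM_top_le hm hmi hA f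
  eLpNorm_two_le f := by simpa using eLpNorm_fourierMultiplierCLM_two_le hm hB f

theorem hasCompactSupport_comp_mul_left {φ : ℝ → ℂ} (hφc : HasCompactSupport φ) {a : ℝ}
    (ha : 0 < a) : HasCompactSupport fun u => φ (a * u) :=
  hφc.comp_homeomorph (Homeomorph.mulLeft₀ a ha.ne')

theorem tsupport_comp_mul_left_subset_Ioi {φ : ℝ → ℂ} (hφ0 : tsupport φ ⊆ Ioi 0) {a : ℝ}
    (ha : 0 < a) : tsupport (fun u => φ (a * u)) ⊆ Ioi 0 := fun _ hu =>
  pos_of_mul_pos_right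
    (hφ0 ((tsupport_comp_eq_preimage φ (Homeomorph.mulLeft₀ a ha.ne')).subset hu)) ha.le

theorem exists_isSublinearOfStrongTypes_waveSymbol {E : Type*} [NormedAddCommGroup E]
    [InnerProductSpace ℝ E] [FiniteDimensional ℝ E] [MeasurableSpace E] [BorelSpace E]
    {φ : ℝ → ℂ} (hφ : ContDiff ℝ ∞ φ) (hφc : HasCompactSupport φ) (hφ0 : tsupport φ ⊆ Ioi 0) :
    ∃ K B : ℝ≥0, ∀ R t : ℝ, 0 < R → t ≠ 0 →
      IsSublinearOfStrongTypes
        (fun g : 𝓢(E, ℂ) =>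
          ⇑(SchwartzMap.fourierMultiplierCLM ℂ (waveSymbol (fun u => φ (R⁻¹ * u)) t) g))
        volume volume
        (K * Real.toNNReal (|t| ^ (-(((finrank ℝ E : ℝ) - 1) / 2)) *
          R ^ (((finrank ℝ E : ℝ) + 1) / 2))) B := by
  obtain ⟨C, hC, hker⟩ := exists_norm_waveKernel_comp_inv_mul_le (E := E) hφ hφc hφ0
  obtain ⟨B, hB⟩ := hφc.exists_bound_of_continuous hφ.continuous
  have hB0 : 0 ≤ B := (norm_nonneg _).trans (hB 0)
  refine ⟨Real.toNNReal ((2 * Real.pi) ^ (-(finrank ℝ E : ℝ)) * C), B.toNNReal,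
    fun R t hR ht => ?_⟩
  have hφR : ContDiff ℝ ∞ fun u => φ (R⁻¹ * u) := hφ.comp (contDiff_const.mul contDiff_id)
  have hφRc := hasCompactSupport_comp_mul_left hφc (inv_pos.2 hR)
  have hφR0 := tsupport_comp_mul_left_subset_Ioi hφ0 (inv_pos.2 hR)
  have hsymb := contDiff_waveSymbol (E := E) hφR hφR0 t
  have hsymbc := hasCompactSupport_waveSymbol (E := E) hφRc t
  refine isSublinearOfStrongTypes_fourierMultiplierCLM (hsymbc.hasTemperateGrowth hsymb)
    (hsymb.continuous.integrable_of_hasCompactSupport hsymbc) (fun y => ?_) fun ξ => ?_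
  · rw [fourierInv_waveSymbol, norm_mul, Complex.norm_of_nonneg (by positivity), NNReal.coe_mul,
      Real.coe_toNNReal _ (by positivity), Real.coe_toNNReal _ (by positivity), mul_assoc,
      ← mul_assoc C]
    gcongr
    exact hker R t y hR ht
  · rw [norm_waveSymbol, Real.coe_toNNReal _ hB0]
    exact hB _

theorem coe_mul_toNNReal_rpow_mul_rpow_rpow (K : ℝ≥0) {a b : ℝ} (ha : 0 < a) (hb : 0 < b)
    (x y θ : ℝ) :
    ((K * Real.toNNReal (a ^ x * b ^ y) : ℝ≥0) : ℝ≥0∞) ^ θ =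
      (K : ℝ≥0∞) ^ θ * (ENNReal.ofReal (a ^ (x * θ)) * ENNReal.ofReal (b ^ (y * θ))) := by
  rw [ENNReal.coe_mul, ENNReal.coe_mul_rpow, ← ENNReal.ofReal,
    ENNReal.ofReal_rpow_of_pos (by positivity), Real.mul_rpow (by positivity) (by positivity),
    ← Real.rpow_mul ha.le, ← Real.rpow_mul hb.le, ENNReal.ofReal_mul (by positivity)]

theorem exists_eLpNorm_fourierMultiplierCLM_waveSymbol_le {E : Type*} [NormedAddCommGroup E]
    [InnerProductSpace ℝ E] [FiniteDimensional ℝ E] [MeasurableSpace E] [BorelSpace E]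
    {p p' : ℝ≥0∞} [p.HolderConjugate p'] (hp : 2 ≤ p) {φ : ℝ → ℂ}
    (hφ : ContDiff ℝ ∞ φ) (hφc : HasCompactSupport φ) (hφ0 : tsupport φ ⊆ Ioi 0) :
    ∃ C : ℝ≥0, ∀ R t : ℝ, 0 < R → t ≠ 0 → ∀ g : 𝓢(E, ℂ),
      eLpNorm (SchwartzMap.fourierMultiplierCLM ℂ (waveSymbol (fun u => φ (R⁻¹ * u)) t) g) p
          volume ≤
        C * ENNReal.ofReal (|t| ^ (-((finrank ℝ E : ℝ) - 1) * (1 / 2 - p⁻¹.toReal))) *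
          ENNReal.ofReal (R ^ (((finrank ℝ E : ℝ) + 1) * (1 / 2 - p⁻¹.toReal))) *
          eLpNorm g p' volume := by
  obtain ⟨K, B, hT⟩ := exists_isSublinearOfStrongTypes_waveSymbol (E := E) hφ hφc hφ0
  obtain ⟨C, hC⟩ := exists_eLpNorm_le_of_isSublinearOfStrongTypes (μ := (volume : Measure E))
    (ν := (volume : Measure E)) (F := ℂ) (G := ℂ) (p' := p') hp
  have hp_inv : p⁻¹.toReal ≤ 2⁻¹ := by
    simpa using ENNReal.toReal_mono (by simp) (ENNReal.inv_le_inv.2 hp)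
  have hθ : 0 ≤ 1 - 2 * p⁻¹.toReal := by linarith
  refine ⟨C * K ^ (1 - 2 * p⁻¹.toReal) * B ^ (2 * p⁻¹.toReal), fun R t hR ht g => ?_⟩
  refine (hC _ _ _ (hT R t hR ht) g).trans_eq ?_
  rw [coe_mul_toNNReal_rpow_mul_rpow_rpow K (abs_pos.2 ht) hR, ENNReal.coe_mul, ENNReal.coe_mul,
    ENNReal.coe_rpow_of_nonneg _ hθ, ENNReal.coe_rpow_of_nonneg _ (by positivity)]
  ring_nf

end DispersiveEstimate

theorem stmt18_general {d : ℕ} {p p' : ℝ≥0∞} (hp : 2 ≤ p) (hpc : p⁻¹ + p'⁻¹ = 1)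
    {φ : ℝ → ℂ} (hφ : ContDiff ℝ ∞ φ) (hφc : HasCompactSupport φ) (hφ0 : tsupport φ ⊆ Ioi 0) :
    ∃ C : ℝ, 0 < C ∧ ∀ R t : ℝ, 0 < R → t ≠ 0 → ∀ g : 𝓢(Ed d, ℂ),
      eLpNorm (fun x : Ed d => (((2 * Real.pi) ^ (-(d : ℝ)) : ℝ) : ℂ) *
          ∫ κ, cexp (I * ((⟪x, κ⟫ : ℂ) + t * ‖κ‖)) * φ (R⁻¹ * ‖κ‖) * ftransform d g κ) p volume ≤
        ENNReal.ofReal C * ENNReal.ofReal (|t| ^ (-((d : ℝ) - 1) * (1 / 2 - p⁻¹.toReal))) *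
          ENNReal.ofReal (R ^ (((d : ℝ) + 1) * (1 / 2 - p⁻¹.toReal))) * eLpNorm g p' volume := by
  have : p.HolderConjugate p' := ⟨by simpa using hpc⟩
  obtain ⟨C, hC⟩ := exists_eLpNorm_fourierMultiplierCLM_waveSymbol_le (E := Ed d) (p' := p') hp
    hφ hφc hφ0
  refine ⟨C + 1, by positivity, fun R t hR ht g => ?_⟩
  have hg := hC R t hR ht g
  rw [finrank_euclideanSpace_fin] at hg
  simp_rw [← fourierMultiplierCLM_waveSymbol_apply (φ := fun u => φ (R⁻¹ * u))
    (hφ.comp (contDiff_const.mul contDiff_id))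
    (hasCompactSupport_comp_mul_left hφc (inv_pos.2 hR))
    (tsupport_comp_mul_left_subset_Ioi hφ0 (inv_pos.2 hR)) t g]
  refine hg.trans ?_
  gcongr
  rw [ENNReal.ofReal_add C.coe_nonneg zero_le_one, ENNReal.ofReal_coe_nnreal]
  exact le_self_add

/-- Frequency-localized dispersive estimate for the half-wave propagator:
with `φ` smooth, `[0,1]`-valued, supported in `[1/2, 2]`, `2 ≤ p ≤ ∞`, `1/p + 1/p' = 1`,
the function `w_j(x) = (2π)^{-d} ∫ e^{i x·κ} e^{i t|κ|} φ(2^{-j}|κ|) ĝ(κ) dκ` satisfies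
`‖w_j‖_{L^p} ≤ C |t|^{-(d-1)(p-2)/(2p)} 2^{j(d+1)(p-2)/(2p)} ‖g‖_{L^{p'}}`
(note `(p-2)/(2p) = 1/2 - 1/p`). -/
theorem stmt18 (d : ℕ) (hd : 2 ≤ d) (p p' : ℝ≥0∞) (hp : 2 ≤ p) (hpc : p⁻¹ + p'⁻¹ = 1)
    (φ : ℝ → ℝ) (hφs : ContDiff ℝ (⊤ : ℕ∞) φ) (hφ01 : ∀ s, 0 ≤ φ s ∧ φ s ≤ 1)
    (hφsupp : Function.support φ ⊆ Set.Icc (1 / 2) 2) :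
    ∃ C : ℝ, 0 < C ∧ ∀ (j : ℤ) (t : ℝ), t ≠ 0 → ∀ g : SchwartzMap (Ed d) ℂ,
      eLpNorm (fun x : Ed d => (((2 * Real.pi) ^ (-(d : ℝ)) : ℝ) : ℂ) *
          ∫ κ, Complex.exp (Complex.I * ((⟪x, κ⟫ : ℂ) + (t : ℂ) * ((‖κ‖ : ℝ) : ℂ))) *
            ((φ ((2 : ℝ) ^ (-j) * ‖κ‖) : ℝ) : ℂ) * ftransform d (⇑g) κ) p volume
        ≤ ENNReal.ofReal C *
            ENNReal.ofReal (|t| ^ (-((d : ℝ) - 1) * (1 / 2 - (p⁻¹).toReal))) *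
            ENNReal.ofReal ((2 : ℝ) ^ ((j : ℝ) * ((d : ℝ) + 1) * (1 / 2 - (p⁻¹).toReal))) *
            eLpNorm (⇑g) p' volume := by
  have hsupp : tsupport (fun s => (φ s : ℂ)) ⊆ Icc (1 / 2) 2 :=
    closure_minimal (fun s hs => hφsupp fun h => hs (by simp [h])) isClosed_Icc
  obtain ⟨C, hC, hbound⟩ := stmt18_general (d := d) hp hpc
    (ofRealCLM.contDiff.comp hφs) (isCompact_Icc.of_isClosed_subset (isClosed_tsupport _) hsupp)
    (hsupp.trans fun s hs => lt_of_lt_of_le one_half_pos hs.1)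
  refine ⟨C, hC, fun j t ht g => ?_⟩
  have hj : (2 : ℝ) ^ ((j : ℝ) * ((d : ℝ) + 1) * (1 / 2 - p⁻¹.toReal)) =
      ((2 : ℝ) ^ j) ^ (((d : ℝ) + 1) * (1 / 2 - p⁻¹.toReal)) := by
    rw [mul_assoc, Real.rpow_mul zero_le_two, Real.rpow_intCast]
  rw [hj, zpow_neg]
  exact hbound _ t (by positivity) ht g
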